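/- arXiv:2310.00292 — 3 statements merged into one kernel-verified Lean document; each statement's English description precedes it below -/
import Mathlib

section
/- Let μ = f·Lⁿ ∈ 𝒲(ℝⁿ), let U ⊆ ℝⁿ be open and bounded, and let g ∈ BV_μ(U) ∩ L^∞(U). Let 𝒦 be the union of all open sets O ⊆ ℝⁿ on which g is constant. Then there exist a constant C(n), depending only on the dimension n, and a family of smooth functions (g_ε)_{ε>0} ⊆ C^∞(U) ∩ BV_μ(U) such that g_ε → g in L¹(μ, U) as ε → 0, ‖g_ε‖_∞ ≤ ‖g‖_∞·(1 + 2ε) for all ε > 0, and limsup_{ε→0} ‖g_ε‖_{BV_μ(U)} ≤ ‖g‖_{BV_μ(U)} + C(n)·‖g‖_∞·∫_{U∖𝒦} |∇f| dx. -/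
/-!
The approximations are mollifications of `g` glued by a partition of unity of `U`, as in the
Meyers-Serrin theorem. The point is to compare `∫ f ⟪∇(ρ * h), p⟫`, for a mollifier `ρ` of radius
`δ` and a bounded field `p`, with the weighted variation of `h` tested on the smooth field `ρ * p`.
By Fubini the difference is the commutator
`∬ (f x - f y) ⟪∇ρ (x - y), p x⟫ h y dx dy` together with `∫ h ⟪ρ * p, ∇f⟫`. Since `f` is in
`W^{1,1}_loc`, its translations satisfy `‖f - f (· - z)‖_{L¹} ≤ ‖z‖ ∫ |∇f|` in a localized form
(`translate_bound`), and `δ ∫ |∇ρ|` does not depend on `δ`; hence the total error is at most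
`(1 + C) ‖h‖_∞ ∫ |∇f|` over a neighbourhood of the support of `p` (`commutator_bound`).

The improvement comes from `∇(ρ * h)` being zero wherever `h` is constant on the ball of radius
`δ`: there `p` may be replaced by `0` without changing `∫ f ⟪∇(ρ * h), p⟫`. As `δ → 0` these sets
exhaust the union `𝒦` of the open sets on which `h` is constant, so only the integral of `|∇f|`
off `𝒦` survives (`local_step`). Summing over the partition of unity `ζ k` (`global_step`), the
test fields of the pieces add up to a field bounded by `1 + ε`, and the terms with `∇(ζ k)` are
small because `∑ ∇(ζ k) = 0` and the pieces are close to `h` in `L¹(μ)`.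

It remains to pass from `g`, which carries no measurability assumption, to a measurable bounded
`h`. If `g` is measurable for the weighted measure, it agrees almost everywhere on `{f ≠ 0}` with a
Lebesgue measurable `h` which can be kept equal to `g` on `𝒦`
(`exists_measurable_modification`); the values on `{f = 0}` play no role since `∇f = 0` almost
everywhere there (`grad_eq_zero_of_eq_zero`). If `g` is not measurable for the weighted measure,
a suitable constant approximates it, because the Bochner integral of `|c - g|` takes its default
value `0` (`exists_const_of_not_measurable`).
-/

open MeasureTheory Set Filter
open scoped ENNReal RealInnerProductSpace Topology

noncomputable section

/-- Euclidean space ℝⁿ. -/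
abbrev En (n : ℕ) := EuclideanSpace ℝ (Fin n)

/-- Divergence of a vector field on ℝⁿ. -/
noncomputable def dvg {n : ℕ} (φ : En n → En n) (x : En n) : ℝ :=
  ∑ i : Fin n, fderiv ℝ φ x (EuclideanSpace.single i 1) i

/-- `f'` is the (weak) gradient of `f`, and both are locally integrable;
this encodes `f ∈ W^{1,1}_loc(ℝⁿ)` with weak gradient `∇f = f'`. -/
def HasWeakGrad {n : ℕ} (f : En n → ℝ) (f' : En n → En n) : Prop :=
  LocallyIntegrable f volume ∧ LocallyIntegrable f' volume ∧
    ∀ φ : En n → En n, ContDiff ℝ 1 φ → HasCompactSupport φ →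
      (∫ x, f x * dvg φ x) = - ∫ x, ⟪φ x, f' x⟫

/-- Membership of `μ = f·Lⁿ` in the class `𝒲(ℝⁿ)`: the density `f` is non-negative,
integrable and lies in `W^{1,1}_loc(ℝⁿ)` with weak gradient `f'`. -/
def MemW {n : ℕ} (f : En n → ℝ) (f' : En n → En n) : Prop :=
  (∀ x, 0 ≤ f x) ∧ Integrable f volume ∧ HasWeakGrad f f'

/-- Admissible test vector fields: `C¹`, compactly supported in `U`, sup-norm at most 1. -/
def IsTestField {n : ℕ} (U : Set (En n)) (φ : En n → En n) : Prop :=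
  ContDiff ℝ 1 φ ∧ HasCompactSupport φ ∧ tsupport φ ⊆ U ∧ ∀ x, ‖φ x‖ ≤ 1

/-- The weighted variation `‖g‖_{BV_μ(U)}` (valued in `ℝ≥0∞`;
membership in `BV_μ(U)` means that this quantity is finite). -/
noncomputable def bvVar {n : ℕ} (f : En n → ℝ) (f' : En n → En n) (U : Set (En n))
    (g : En n → ℝ) : ℝ≥0∞ :=
  ⨆ (φ : En n → En n) (_ : IsTestField U φ),
    ENNReal.ofReal (∫ x in U, g x * (f x * dvg φ x + ⟪φ x, f' x⟫))

/-- The weighted perimeter `Per_μ(E; U)`. -/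
noncomputable def perim {n : ℕ} (f : En n → ℝ) (f' : En n → En n) (U : Set (En n))
    (E : Set (En n)) : ℝ≥0∞ :=
  bvVar f f' U (E.indicator fun _ => (1 : ℝ))

/-- The measure `μ = f·Lⁿ`. -/
noncomputable def muM {n : ℕ} (f : En n → ℝ) : Measure (En n) :=
  volume.withDensity fun x => ENNReal.ofReal (f x)

/-- One-dimensional generalized Ehrhard symmetrization of `A ⊆ ℝ` in direction `v ∈ {−1,+1}`
with respect to a measure `ν` on `ℝ`: the largest half-line `{t : v·t ≥ c}` of `ν`-measure
`ν A` (with the conventions `∅`, `ℝ` when `c = ±∞`). -/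
def ehrhard1D (ν : Measure ℝ) (v : ℝ) (A : Set ℝ) : Set ℝ :=
  {t | ∀ b : ℝ, (∀ c : ℝ, ν {y | c ≤ v * y} ≤ ν A → b ≤ c) → b ≤ v * t}

/-- The weighted measure `f·H¹` on the fiber `{x + t·v : t ∈ ℝ}`, identified with `ℝ`. -/
noncomputable def fiberMeasure {n : ℕ} (f : En n → ℝ) (x v : En n) : Measure ℝ :=
  (volume : Measure ℝ).withDensity fun t => ENNReal.ofReal (f (x + t • v))

/-- Generalized `v`-Ehrhard symmetrization of `E ⊆ ℝⁿ` with respect to `μ = f·Lⁿ`: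
on each fiber over `v^⊥` one replaces `E` by the largest half-line in direction `v`
of the same weighted measure. -/
def ehrhardSymm {n : ℕ} (f : En n → ℝ) (v : En n) (E : Set (En n)) : Set (En n) :=
  {z | ⟪z, v⟫ ∈
      ehrhard1D (fiberMeasure f (z - ⟪z, v⟫ • v) v) 1
        {t | (z - ⟪z, v⟫ • v) + t • v ∈ E}}

/-- `μ = f·Lⁿ` is a perimeter symmetrization (PS) measure: generalized Ehrhard
symmetrization does not increase the weighted perimeter of sets of finite `μ`-perimeter. -/
def IsPSMeasure {n : ℕ} (f : En n → ℝ) (f' : En n → En n) : Prop :=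
  ∀ v : En n, ‖v‖ = 1 → ∀ E : Set (En n), NullMeasurableSet E volume →
    perim f f' univ E < ⊤ →
      perim f f' univ (ehrhardSymm f v E) ≤ perim f f' univ E

/-- The half-space `H(v, r) = {x : x·v ≥ r}`. -/
def halfSpace {n : ℕ} (v : En n) (r : ℝ) : Set (En n) := {x | r ≤ ⟪x, v⟫}

/-- `H_μ(E, v)`: the largest half-space in direction `v` with `μ`-measure `μ(E)`. -/
def halfSpaceOf {n : ℕ} (f : En n → ℝ) (E : Set (En n)) (v : En n) : Set (En n) :=
  {x | ∀ b : ℝ, (∀ c : ℝ, muM f (halfSpace v c) ≤ muM f E → b ≤ c) → b ≤ ⟪x, v⟫}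

/-- `g'` is the weak derivative of `g : ℝ → ℝ` (so `g ∈ W^{1,1}_loc(ℝ)`). -/
def HasWeakDeriv (g g' : ℝ → ℝ) : Prop :=
  LocallyIntegrable g volume ∧ LocallyIntegrable g' volume ∧
    ∀ φ : ℝ → ℝ, ContDiff ℝ 1 φ → HasCompactSupport φ →
      (∫ t, g t * deriv φ t) = - ∫ t, φ t * g' t

section
open scoped ContDiff

/-! ### Mollifiers -/

/-- An even smooth mollifier of radius `δ`, with the scale-invariant gradient bound
`δ ∫ ‖∇ρ‖ ≤ C`. -/
structure IsMoll {n : ℕ} (C δ : ℝ) (ρ : En n → ℝ) : Prop where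
  pos : 0 < δ
  smooth : ContDiff ℝ ∞ ρ
  cpt : HasCompactSupport ρ
  nonneg : ∀ x, 0 ≤ ρ x
  even : ∀ x, ρ (-x) = ρ x
  supp : ∀ x, δ ≤ ‖x‖ → ρ x = 0
  int_one : ∫ x, ρ x = 1
  grad : δ * ∫ x, ‖fderiv ℝ ρ x‖ ≤ C

/-- Mollification of `h` by the kernel `ρ`. -/
def mol {n : ℕ} {F : Type*} [NormedAddCommGroup F] [NormedSpace ℝ F]
    (ρ : En n → ℝ) (h : En n → F) (x : En n) : F := ∫ y, ρ (x - y) • h y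

/-- Rescaled bump functions are mollifiers with one constant `C` depending only on the dimension,
since `δ ∫ ‖∇ρ‖` is invariant under rescaling; along them mollifications converge almost
everywhere by Lebesgue differentiation. -/
lemma exists_moll (n : ℕ) : ∃ C : ℝ, 0 ≤ C ∧ ∃ ρ : ℕ → En n → ℝ,
    (∀ j : ℕ, IsMoll C (1 / ((j : ℝ) + 1)) (ρ j)) ∧
    ∀ h : En n → ℝ, LocallyIntegrable h volume →
      ∀ᵐ x, Tendsto (fun j => mol (ρ j) h x) atTop (𝓝 (h x)) := by
  have hp : ∀ j : ℕ, (0 : ℝ) < 1 / ((j : ℝ) + 1) := fun j => by positivity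
  let B : ∀ r : ℝ, 0 < r → ContDiffBump (0 : En n) := fun r hr => ⟨r / 2, r, by linarith, by linarith⟩
  let ρ : ℕ → En n → ℝ := fun j => (B _ (hp j)).normed volume
  let b := B 1 one_pos
  -- `B r` is the rescaling of `b` by the factor `r`, hence scale invariance of `r ∫ ‖∇ρ‖`
  have key : ∀ r (hr : 0 < r), r * ∫ x, ‖fderiv ℝ ((B r hr).normed volume) x‖
      = ∫ x, ‖fderiv ℝ (b.normed volume) x‖ := by
    intro r hr
    have h1 : ∀ x, (B r hr) x = b (r⁻¹ • x) := by
      intro x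
      simp only [ContDiffBump.apply, B, b, sub_zero, smul_smul]
      have e1 : r / (r / 2) = 1 / (1 / 2) := by field_simp
      have e2 : (r / 2)⁻¹ = (1 / 2 : ℝ)⁻¹ * r⁻¹ := by field_simp
      rw [e1, e2]
    have h2 : ∫ x, (B r hr) x = r ^ (Module.finrank ℝ (En n)) * ∫ x, b x := by
      simp_rw [h1]
      exact Measure.integral_comp_inv_smul_of_nonneg volume (fun x => b x) hr.le
    set d := Module.finrank ℝ (En n)
    have h3 : (B r hr).normed volume = fun x => (r ^ d)⁻¹ * b.normed volume (r⁻¹ • x) := by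
      ext x
      rw [ContDiffBump.normed_def, ContDiffBump.normed_def, h1, h2]
      have := b.integral_pos (μ := (volume : Measure (En n)))
      field_simp
    have h4 : ∀ x, ‖fderiv ℝ ((B r hr).normed volume) x‖ =
        (r ^ d)⁻¹ * r⁻¹ * ‖fderiv ℝ (b.normed volume) (r⁻¹ • x)‖ := by
      intro x
      have hd : HasFDerivAt (b.normed volume) (fderiv ℝ (b.normed volume) (r⁻¹ • x)) (r⁻¹ • x) :=
        ((b.contDiff_normed (n := 1)).differentiable (by simp)).differentiableAt.hasFDerivAt
      have h5 : HasFDerivAt (fun x : En n => r⁻¹ • x) (r⁻¹ • ContinuousLinearMap.id ℝ (En n)) x :=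
        (hasFDerivAt_id x).const_smul r⁻¹
      have h6 := (hd.comp x h5).const_mul ((r ^ d)⁻¹)
      rw [h3]
      have h7 : fderiv ℝ (fun x => (r ^ d)⁻¹ * b.normed volume (r⁻¹ • x)) x = _ := h6.fderiv
      rw [h7, norm_smul, ContinuousLinearMap.comp_smul, ContinuousLinearMap.comp_id, norm_smul]
      simp [abs_of_pos hr, mul_assoc]
    simp_rw [h4]
    rw [integral_const_mul, Measure.integral_comp_inv_smul_of_nonneg volume
      (fun x => ‖fderiv ℝ (b.normed volume) x‖) hr.le]
    rw [smul_eq_mul]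
    have : (r ^ d) ≠ 0 := by positivity
    field_simp
    rfl
  refine ⟨∫ x, ‖fderiv ℝ (b.normed volume) x‖, integral_nonneg fun _ => norm_nonneg _, ρ, ?_, ?_⟩
  · intro j
    refine ⟨hp j, ContDiffBump.contDiff_normed _, ContDiffBump.hasCompactSupport_normed _,
      fun x => ContDiffBump.nonneg_normed _ x, fun x => ContDiffBump.normed_neg _ x, ?_,
      ContDiffBump.integral_normed _, (key _ (hp j)).le⟩
    intro x hx
    by_contra h
    have : x ∈ Function.support ((B _ (hp j)).normed volume) := h
    rw [ContDiffBump.support_normed_eq] at this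
    simp [B] at this hx
    linarith
  · intro h hh
    have := ContDiffBump.ae_convolution_tendsto_right_of_locallyIntegrable (μ := volume)
      (φ := fun j : ℕ => B _ (hp j)) (l := atTop) (K := 2) (g := h)
      (by simpa [B] using tendsto_one_div_add_atTop_nhds_zero_nat (𝕜 := ℝ))
      (by simp [B]; exact ⟨0, fun b _ => by ring_nf; rfl⟩) hh
    filter_upwards [this] with x hx
    refine hx.congr fun j => ?_
    rw [convolution_lsmul_swap]; rfl

section
variable {n : ℕ} {C δ : ℝ} {ρ : En n → ℝ} {F : Type*} [NormedAddCommGroup F] [NormedSpace ℝ F]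

lemma mol_eq_conv (h : En n → F) :
    mol ρ h = convolution ρ h (ContinuousLinearMap.lsmul ℝ ℝ) volume := by
  ext x; rw [convolution_lsmul_swap]; rfl

lemma IsMoll.contDiff_mol (hρ : IsMoll C δ ρ) {h : En n → F}
    (hh : LocallyIntegrable h volume) : ContDiff ℝ ∞ (mol ρ h) := by
  rw [mol_eq_conv]
  exact hρ.cpt.contDiff_convolution_left _ hρ.smooth hh

lemma IsMoll.cont_fderiv (hρ : IsMoll C δ ρ) : Continuous (fderiv ℝ ρ) :=
  hρ.smooth.continuous_fderiv (by simp)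

lemma IsMoll.fderiv_supp (hρ : IsMoll C δ ρ) {x : En n} (hx : δ < ‖x‖) : fderiv ℝ ρ x = 0 := by
  have : ρ =ᶠ[𝓝 x] fun _ => 0 := by
    filter_upwards [continuous_norm.continuousAt.eventually (lt_mem_nhds hx)] with y hy
    exact hρ.supp y hy.le
  rw [this.fderiv_eq]; simp

lemma IsMoll.fderiv_supp' (hρ : IsMoll C δ ρ) {x : En n} (hx : δ ≤ ‖x‖) : fderiv ℝ ρ x = 0 := by
  rcases hx.lt_or_eq with h | h
  · exact hρ.fderiv_supp h
  have hx0 : x ≠ 0 := by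
    rintro rfl
    have := hρ.pos
    simp at h; linarith
  -- by continuity along the dilates of `x`
  have h1 : Tendsto (fun t : ℝ => fderiv ℝ ρ (t • x)) (𝓝[>] 1) (𝓝 (fderiv ℝ ρ ((1:ℝ) • x))) :=
    ((hρ.cont_fderiv.comp (continuous_id.smul continuous_const)).tendsto 1).mono_left
      nhdsWithin_le_nhds
  have h2 : Tendsto (fun t : ℝ => fderiv ℝ ρ (t • x)) (𝓝[>] 1) (𝓝 0) := by
    refine tendsto_const_nhds.congr' ?_
    filter_upwards [self_mem_nhdsWithin] with t ht
    refine (hρ.fderiv_supp ?_).symm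
    have ht : 1 < t := ht
    rw [norm_smul, Real.norm_eq_abs, abs_of_pos (by linarith), ← h]
    nlinarith [hρ.pos]
  simpa using tendsto_nhds_unique h1 h2

lemma IsMoll.fderiv_neg (hρ : IsMoll C δ ρ) (x v : En n) :
    fderiv ℝ ρ (-x) v = - fderiv ℝ ρ x v := by
  have h1 : HasFDerivAt ρ (fderiv ℝ ρ (-x)) (-x) :=
    ((hρ.smooth.differentiable (by simp)).differentiableAt).hasFDerivAt
  have h2 := h1.comp x (hasFDerivAt_id x).neg
  have h3 : (ρ ∘ fun x => -x) = ρ := by ext y; exact hρ.even y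
  have h4 : HasFDerivAt ρ ((fderiv ℝ ρ (-x)).comp (-ContinuousLinearMap.id ℝ (En n))) x := by
    have h5 : HasFDerivAt (ρ ∘ fun x => -x) _ x := h2
    rw [h3] at h5; exact h5
  rw [h4.fderiv]; simp

lemma IsMoll.fderiv_bdd (hρ : IsMoll C δ ρ) : ∃ B, 0 ≤ B ∧ ∀ x, ‖fderiv ℝ ρ x‖ ≤ B := by
  obtain ⟨B, hB⟩ := (hρ.cpt.fderiv ℝ).exists_bound_of_continuous hρ.cont_fderiv
  exact ⟨B, (norm_nonneg _).trans (hB 0), hB⟩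

lemma IsMoll.fderiv_mol (hρ : IsMoll C δ ρ) {h : En n → F} [CompleteSpace F]
    (hh : LocallyIntegrable h volume) (x v : En n) :
    fderiv ℝ (mol ρ h) x v = ∫ y, (fderiv ℝ ρ (x - y) v) • h y := by
  rw [mol_eq_conv, (hρ.cpt.hasFDerivAt_convolution_left _ (hρ.smooth.of_le (by simp)) hh x).fderiv,
    convolution_eq_swap, ContinuousLinearMap.integral_apply]
  · rfl
  · exact (((hρ.cpt.fderiv ℝ).convolutionExists_left _ hρ.cont_fderiv hh) x).integrable_swap

lemma IsMoll.integrable_mol (hρ : IsMoll C δ ρ) {h : En n → F}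
    (hh : LocallyIntegrable h volume) (x : En n) : Integrable (fun y => ρ (x - y) • h y) :=
  ((hρ.cpt.convolutionExists_left (ContinuousLinearMap.lsmul ℝ ℝ)
    hρ.smooth.continuous hh) x).integrable_swap

lemma IsMoll.integral_sub (hρ : IsMoll C δ ρ) (x : En n) : ∫ y, ρ (x - y) = 1 := by
  rw [integral_sub_left_eq_self (fun y => ρ y) volume x, hρ.int_one]

lemma IsMoll.integrable (hρ : IsMoll C δ ρ) : Integrable ρ :=
  hρ.smooth.continuous.integrable_of_hasCompactSupport hρ.cpt

/-- A mollification is bounded at `x` by any bound for `h` on the ball of radius `δ`. -/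
lemma IsMoll.norm_mol_le (hρ : IsMoll C δ ρ) {h : En n → F} {m : ℝ} (x : En n)
    (hm : ∀ᵐ y, ‖x - y‖ < δ → ‖h y‖ ≤ m) : ‖mol ρ h x‖ ≤ m := by
  have h1 : Integrable fun y => ρ (x - y) * m := (hρ.integrable.comp_sub_left x).mul_const m
  calc ‖mol ρ h x‖ ≤ ∫ y, ρ (x - y) * m := by
        refine norm_integral_le_of_norm_le h1 ?_
        filter_upwards [hm] with y hy
        rw [norm_smul, Real.norm_eq_abs, abs_of_nonneg (hρ.nonneg _)]
        by_cases hd : ‖x - y‖ < δ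
        · exact mul_le_mul_of_nonneg_left (hy hd) (hρ.nonneg _)
        · rw [hρ.supp _ (not_lt.1 hd)]; simp
    _ = m := by rw [integral_mul_const, hρ.integral_sub, one_mul]

lemma IsMoll.tsupport_mol (hρ : IsMoll C δ ρ) {h : En n → F} {S : Set (En n)}
    (hS : ∀ x, x ∉ S → h x = 0) : tsupport (mol ρ h) ⊆ Metric.cthickening δ S := by
  refine closure_minimal ?_ Metric.isClosed_cthickening
  intro x hx
  by_contra hc
  refine hx (integral_eq_zero_of_ae (Eventually.of_forall fun y => ?_))
  by_cases hy : y ∈ S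
  · have : δ ≤ ‖x - y‖ := by
      by_contra hlt
      exact hc (Metric.mem_cthickening_of_dist_le x y δ S hy
        (by rw [dist_eq_norm]; exact (not_le.1 hlt).le))
    simp [hρ.supp _ this]
  · simp [hS y hy]

end

/-- For a vector field, the divergence of the mollification pairs the field with `∇ρ`. -/
lemma IsMoll.dvg_mol {n : ℕ} {C δ : ℝ} {ρ : En n → ℝ} (hρ : IsMoll C δ ρ) {h : En n → En n}
    (hh : LocallyIntegrable h volume) (x : En n) :
    dvg (mol ρ h) x = ∫ y, fderiv ℝ ρ (x - y) (h y) := by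
  have hi : ∀ v : En n, Integrable fun y => (fderiv ℝ ρ (x - y) v) • h y := by
    intro v
    have hc : HasCompactSupport (fun y => fderiv ℝ ρ y v) :=
      (hρ.cpt.fderiv ℝ).comp_left (g := fun L : En n →L[ℝ] ℝ => L v) (by simp)
    exact ((hc.convolutionExists_left (ContinuousLinearMap.lsmul ℝ ℝ)
      (hρ.cont_fderiv.clm_apply continuous_const) hh) x).integrable_swap
  unfold dvg
  have h1 : ∀ i : Fin n, (fderiv ℝ (mol ρ h) x (EuclideanSpace.single i 1)) i =
      ∫ y, fderiv ℝ ρ (x - y) (EuclideanSpace.single i 1) * h y i := by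
    intro i
    rw [hρ.fderiv_mol hh]
    have := (EuclideanSpace.proj (𝕜 := ℝ) i).integral_comp_comm (hi (EuclideanSpace.single i 1))
    simpa using this.symm
  simp_rw [h1]
  rw [← integral_finsetSum]
  · refine integral_congr_ae (Eventually.of_forall fun y => ?_)
    simp only
    conv_rhs => rw [← (EuclideanSpace.basisFun (Fin n) ℝ).sum_repr (h y)]
    simp [map_sum, mul_comm]
  · intro i _
    have := (EuclideanSpace.proj (𝕜 := ℝ) i).integrable_comp (hi (EuclideanSpace.single i 1))
    simpa using this

/-! ### Translations of a `W^{1,1}` weight -/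

lemma clm_eq_sum {n : ℕ} (L : En n →L[ℝ] ℝ) (v : En n) :
    ∑ i : Fin n, L (EuclideanSpace.single i 1) * v i = L v := by
  conv_rhs => rw [← (EuclideanSpace.basisFun (Fin n) ℝ).sum_repr v]
  simp [map_sum, mul_comm]

lemma dvg_smul {n : ℕ} {b : En n → ℝ} {φ : En n → En n} {x : En n}
    (hb : DifferentiableAt ℝ b x) (hφ : DifferentiableAt ℝ φ x) :
    dvg (fun y => b y • φ y) x = b x * dvg φ x + fderiv ℝ b x (φ x) := by
  unfold dvg
  have h := (hb.hasFDerivAt.smul hφ.hasFDerivAt).fderiv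
  have h' : fderiv ℝ (fun y => b y • φ y) x = _ := h
  rw [h', Finset.mul_sum, ← clm_eq_sum (fderiv ℝ b x) (φ x), ← Finset.sum_add_distrib]
  refine Finset.sum_congr rfl fun i _ => ?_
  simp

lemma dvg_sum {n : ℕ} {ι : Type*} (s : Finset ι) {φ : ι → En n → En n} {x : En n}
    (hφ : ∀ i ∈ s, DifferentiableAt ℝ (φ i) x) :
    dvg (fun y => ∑ i ∈ s, φ i y) x = ∑ i ∈ s, dvg (φ i) x := by
  unfold dvg
  rw [Finset.sum_comm]
  refine Finset.sum_congr rfl fun i _ => ?_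
  rw [fderiv_fun_sum hφ]
  simp

lemma dvg_const_smul {n : ℕ} (c : ℝ) {φ : En n → En n} {x : En n}
    (hφ : DifferentiableAt ℝ φ x) : dvg (fun y => c • φ y) x = c * dvg φ x := by
  rw [dvg_smul (differentiableAt_const c) hφ]; simp

lemma dvg_const {n : ℕ} (v x : En n) : dvg (fun _ : En n => v) x = 0 := by
  simp [dvg]

section
variable {n : ℕ} {f : En n → ℝ} {f' : En n → En n}

/-- Translation estimate for a `C¹` weight `b`: the function `t ↦ ∫ f(x) b(x + t z) dx` has
derivative `-∫ b(x + t z) ⟪z, f'⟫`, so the mean value inequality applies. The constant `c` allows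
the first order expansion in `z` as well as plain bounds. -/
lemma translate_smooth (hf : Integrable f) (hw : HasWeakGrad f f') {b : En n → ℝ}
    (hb : ContDiff ℝ 1 b) (hbc : HasCompactSupport b) (z : En n) {c K : ℝ}
    (h : ∀ t ∈ Icc (0 : ℝ) 1, |(∫ x, b (x + t • z) * ⟪z, f' x⟫) - c| ≤ K) :
    |(∫ x, f x * b (x + z)) - (∫ x, f x * b x) + c| ≤ K := by
  obtain ⟨B, hB⟩ := (hbc.fderiv ℝ).exists_bound_of_continuous (hb.continuous_fderiv (by simp))
  obtain ⟨B0, hB0⟩ := hbc.exists_bound_of_continuous hb.continuous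
  have hbd : ∀ x, HasFDerivAt b (fderiv ℝ b x) x := fun x =>
    ((hb.differentiable (by simp)).differentiableAt).hasFDerivAt
  have hline : ∀ (x : En n) (t : ℝ), HasDerivAt (fun t : ℝ => b (x + t • z))
      (fderiv ℝ b (x + t • z) z) t := by
    intro x t
    have h1 : HasDerivAt (fun t : ℝ => x + t • z) z t := by
      simpa using ((hasDerivAt_id t).smul_const z).const_add x
    exact (hbd _).comp_hasDerivAt t h1
  have hbt : ∀ t : ℝ, Continuous fun x => b (x + t • z) := fun t =>
    hb.continuous.comp (continuous_id.add continuous_const)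
  have hfb : ∀ t : ℝ, Integrable fun x => f x * b (x + t • z) := fun t =>
    hf.mul_bdd (c := B0) (hbt t).aestronglyMeasurable (Eventually.of_forall fun x => hB0 _)
  have hder : ∀ t : ℝ, HasDerivAt (fun t : ℝ => ∫ x, f x * b (x + t • z))
      (-∫ x, b (x + t • z) * ⟪z, f' x⟫) t := by
    intro t
    have h1 := (hasDerivAt_integral_of_dominated_loc_of_deriv_le (μ := (volume : Measure (En n)))
      (F := fun t x => f x * b (x + t • z)) (x₀ := t) (s := univ)
      (F' := fun t x => f x * fderiv ℝ b (x + t • z) z) (bound := fun x => |f x| * (B * ‖z‖))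
      univ_mem (Eventually.of_forall fun t => (hfb t).aestronglyMeasurable) (hfb t)
      (hf.aestronglyMeasurable.mul (((hb.continuous_fderiv (by simp)).comp
        (continuous_id.add continuous_const)).clm_apply continuous_const).aestronglyMeasurable)
      (Eventually.of_forall fun x t _ => ?_) (hf.abs.mul_const _)
      (Eventually.of_forall fun x t _ => (hline x t).const_mul (f x))).2
    · have h2 := hw.2.2 (fun x => b (x + t • z) • z)
        ((hb.comp (contDiff_id.add contDiff_const)).smul contDiff_const)
        ((hbc.comp_homeomorph (Homeomorph.addRight (t • z))).smul_right)
      have h3 : ∀ x, dvg (fun x => b (x + t • z) • z) x = fderiv ℝ b (x + t • z) z := by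
        intro x
        have h4 : HasFDerivAt (fun x => b (x + t • z)) (fderiv ℝ b (x + t • z)) x :=
          (hasFDerivAt_comp_add_right (t • z)).2 (hbd _)
        rw [dvg_smul h4.differentiableAt (differentiableAt_const z), dvg_const, h4.fderiv]
        simp
      simp_rw [h3, inner_smul_left] at h2
      simp only [conj_trivial] at h2
      rw [← h2]; exact h1
    · rw [norm_mul, Real.norm_eq_abs]
      gcongr
      exact ((fderiv ℝ b (x + t • z)).le_opNorm z).trans (by gcongr; exact hB _)
  have hmv := (convex_Icc (0:ℝ) 1).norm_image_sub_le_of_norm_hasDerivWithin_le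
    (f := fun t : ℝ => (∫ x, f x * b (x + t • z)) + t * c)
    (f' := fun t => (-∫ x, b (x + t • z) * ⟪z, f' x⟫) + c) (C := K) (x := 0) (y := 1)
    (fun t _ => ((hder t).add (by simpa using (hasDerivAt_id t).mul_const c)).hasDerivWithinAt)
    (fun t ht => by
      rw [Real.norm_eq_abs, ← abs_neg]; convert h t ht using 2; ring) (by simp) (by simp)
  simp only [one_smul, zero_smul, add_zero, one_mul, zero_mul, sub_zero, norm_one, mul_one] at hmv
  rw [Real.norm_eq_abs] at hmv
  convert hmv using 2; ring

/-- The translation estimate for bounded measurable weights, by mollification of the weight. -/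
lemma translate_meas (hf : Integrable f) (hw : HasWeakGrad f f') {C : ℝ} {ρ : ℕ → En n → ℝ}
    (hρ : ∀ j : ℕ, IsMoll C (1 / ((j : ℝ) + 1)) (ρ j))
    (hae : ∀ h : En n → ℝ, LocallyIntegrable h volume →
      ∀ᵐ x, Tendsto (fun j => mol (ρ j) h x) atTop (𝓝 (h x)))
    {a : En n → ℝ} {A R : ℝ} (ham : AEStronglyMeasurable a volume) (hA : ∀ x, |a x| ≤ A)
    (haR : ∀ x, R < ‖x‖ → a x = 0) (z : En n) {c : ℕ → ℝ} {c₀ K : ℝ}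
    (hc : Tendsto c atTop (𝓝 c₀))
    (h : ∀ᶠ j in atTop, ∀ t ∈ Icc (0 : ℝ) 1,
      |(∫ x, mol (ρ j) a (x + t • z) * ⟪z, f' x⟫) - c j| ≤ K) :
    |(∫ x, f x * a (x + z)) - (∫ x, f x * a x) + c₀| ≤ K := by
  have hai : Integrable a := by
    have h1 : IntegrableOn a (Metric.closedBall 0 R) :=
      Measure.integrableOn_of_bounded (M := A) measure_closedBall_lt_top.ne ham
        (Eventually.of_forall hA)
    refine h1.integrable_of_forall_notMem_eq_zero fun x hx => haR x ?_
    simpa using hx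
  have hal := hai.locallyIntegrable
  have hb : ∀ j x, |mol (ρ j) a x| ≤ A := fun j x => by
    rw [← Real.norm_eq_abs]
    exact (hρ j).norm_mol_le x (Eventually.of_forall fun y _ => hA y)
  have hsm : ∀ j, ContDiff ℝ ∞ (mol (ρ j) a) := fun j => (hρ j).contDiff_mol hal
  have hcs : ∀ j, HasCompactSupport (mol (ρ j) a) := by
    intro j
    refine IsCompact.of_isClosed_subset ?_ (isClosed_tsupport _)
      ((hρ j).tsupport_mol (S := Metric.closedBall 0 R) fun x hx => haR x (by simpa using hx))
    exact (isCompact_closedBall _ _).cthickening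
  have hlim := hae a hal
  have hlim2 : ∀ᵐ x, Tendsto (fun j => mol (ρ j) a (x + z)) atTop (𝓝 (a (x + z))) :=
    (measurePreserving_add_right volume z).quasiMeasurePreserving.ae hlim
  have t1 : Tendsto (fun j => ∫ x, f x * mol (ρ j) a (x + z)) atTop
      (𝓝 (∫ x, f x * a (x + z))) := by
    refine tendsto_integral_of_dominated_convergence (fun x => |f x| * A) (fun j => ?_)
      (hf.abs.mul_const A) (fun j => Eventually.of_forall fun x => ?_) ?_
    · exact hf.aestronglyMeasurable.mul (((hsm j).continuous.comp
        (continuous_id.add continuous_const)).aestronglyMeasurable)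
    · rw [norm_mul, Real.norm_eq_abs]; gcongr; exact hb j _
    · filter_upwards [hlim2] with x hx using hx.const_mul _
  have t2 : Tendsto (fun j => ∫ x, f x * mol (ρ j) a x) atTop (𝓝 (∫ x, f x * a x)) := by
    refine tendsto_integral_of_dominated_convergence (fun x => |f x| * A) (fun j => ?_)
      (hf.abs.mul_const A) (fun j => Eventually.of_forall fun x => ?_) ?_
    · exact hf.aestronglyMeasurable.mul (hsm j).continuous.aestronglyMeasurable
    · rw [norm_mul, Real.norm_eq_abs]; gcongr; exact hb j _
    · filter_upwards [hlim] with x hx using hx.const_mul _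
  refine le_of_tendsto ((t1.sub t2).add hc).abs ?_
  filter_upwards [h] with j hj
  exact translate_smooth hf hw ((hsm j).of_le (by simp)) (hcs j) z hj

/-- `L¹` bound for difference quotients against a weight `a`: the translate only sees `f'`
through a majorant `m` of `a` on balls of radius larger than `‖z‖`. -/
lemma translate_bound (hf : Integrable f) (hw : HasWeakGrad f f') {C : ℝ} {ρ : ℕ → En n → ℝ}
    (hρ : ∀ j : ℕ, IsMoll C (1 / ((j : ℝ) + 1)) (ρ j))
    (hae : ∀ h : En n → ℝ, LocallyIntegrable h volume →
      ∀ᵐ x, Tendsto (fun j => mol (ρ j) h x) atTop (𝓝 (h x)))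
    {a : En n → ℝ} {A R : ℝ} (ham : AEStronglyMeasurable a volume) (hA : ∀ x, |a x| ≤ A)
    (haR : ∀ x, R < ‖x‖ → a x = 0) (z : En n) {r : ℝ} (hr : ‖z‖ < r) {m : En n → ℝ}
    (hm : ∀ x y, ‖x - y‖ < r → |a x| ≤ m y) (hmi : Integrable fun y => m y * ‖f' y‖) :
    |∫ x, a x * (f x - f (x - z))| ≤ ‖z‖ * ∫ y, m y * ‖f' y‖ := by
  have key := translate_meas hf hw hρ hae ham hA haR z (c := fun _ => 0) (c₀ := 0)
    (K := ‖z‖ * ∫ y, m y * ‖f' y‖) tendsto_const_nhds ?_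
  · have i1 : Integrable fun x => a x * f x :=
      hf.bdd_mul (c := A) ham (Eventually.of_forall hA)
    have i2 : Integrable fun x => a x * f (x - z) :=
      (hf.comp_sub_right z).bdd_mul (c := A) ham (Eventually.of_forall hA)
    have e1 : ∫ x, a x * (f x - f (x - z)) = (∫ x, a x * f x) - ∫ x, a x * f (x - z) := by
      simp_rw [mul_sub]; exact integral_sub i1 i2
    have e2 : ∫ x, a x * f (x - z) = ∫ x, f x * a (x + z) := by
      rw [← integral_add_right_eq_self (fun x => a x * f (x - z)) z]
      simp [mul_comm]
    have e3 : ∫ x, a x * f x = ∫ x, f x * a x := by simp_rw [mul_comm]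
    rw [e1, e2, e3, ← abs_neg]
    convert key using 2; ring
  · have : ∀ᶠ j : ℕ in atTop, 1 / ((j : ℝ) + 1) < r - ‖z‖ :=
      (tendsto_one_div_add_atTop_nhds_zero_nat (𝕜 := ℝ)).eventually (gt_mem_nhds (by linarith))
    filter_upwards [this] with j hj t ht
    rw [sub_zero, ← Real.norm_eq_abs, ← integral_const_mul]
    refine norm_integral_le_of_norm_le (hmi.const_mul _) (Eventually.of_forall fun y => ?_)
    have h1 : ‖mol (ρ j) a (y + t • z)‖ ≤ m y := by
      refine (hρ j).norm_mol_le _ (Eventually.of_forall fun x hx => hm x y ?_)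
      have h2 : ‖t • z‖ ≤ ‖z‖ := by
        rw [norm_smul, Real.norm_eq_abs, abs_of_nonneg ht.1]
        exact mul_le_of_le_one_left (norm_nonneg _) ht.2
      calc ‖x - y‖ = ‖t • z - (y + t • z - x)‖ := by congr 1; abel
        _ ≤ ‖t • z‖ + ‖y + t • z - x‖ := norm_sub_le _ _
        _ < r := by linarith
    rw [norm_mul]
    have h3 : ‖(⟪z, f' y⟫ : ℝ)‖ ≤ ‖z‖ * ‖f' y‖ := norm_inner_le_norm z (f' y)
    calc _ ≤ m y * (‖z‖ * ‖f' y‖) := by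
          gcongr
          exact (norm_nonneg _).trans h1
      _ = _ := by ring
end

/-! ### The gradient of the weight on its zero set -/

section
variable {n : ℕ} {f : En n → ℝ} {f' : En n → En n}

/-- A nonnegative function cannot decrease to first order from its zero set: translating the
indicator of `A ⊆ {f = 0}` by `s • z` changes `∫ f` by `- s ∫_A ⟪z, f'⟫ + o(s)`, which has to be
nonnegative. -/
lemma setIntegral_inner_grad_nonpos (hf : Integrable f) (hf0 : ∀ x, 0 ≤ f x)
    (hw : HasWeakGrad f f') {C : ℝ} {ρ : ℕ → En n → ℝ}
    (hρ : ∀ j : ℕ, IsMoll C (1 / ((j : ℝ) + 1)) (ρ j))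
    (hae : ∀ h : En n → ℝ, LocallyIntegrable h volume →
      ∀ᵐ x, Tendsto (fun j => mol (ρ j) h x) atTop (𝓝 (h x)))
    {A : Set (En n)} (hA : MeasurableSet A) {R : ℝ} (hAR : A ⊆ Metric.closedBall 0 R)
    (hfA : ∀ᵐ x, x ∈ A → f x = 0) (z : En n) : ∫ x in A, ⟪z, f' x⟫ ≤ 0 := by
  classical
  set a : En n → ℝ := A.indicator fun _ => 1 with ha
  set Q : Set (En n) := Metric.closedBall 0 (R + 2) with hQ
  set u : En n → ℝ := Q.indicator fun x => ⟪z, f' x⟫ with hu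
  have ha1 : ∀ x, |a x| ≤ 1 := fun x => by
    by_cases hx : x ∈ A <;> simp [ha, hx]
  have haR : ∀ x, R < ‖x‖ → a x = 0 := fun x hx => by
    have : x ∉ A := fun h => by have := hAR h; simp at this; linarith
    simp [ha, this]
  have ham : AEStronglyMeasurable a volume :=
    (aestronglyMeasurable_const (b := (1:ℝ))).indicator hA
  have hal : LocallyIntegrable a volume :=
    ((integrable_indicator_iff hA).2 (integrableOn_const (C := (1:ℝ))
      ((measure_mono hAR).trans_lt measure_closedBall_lt_top).ne)).locallyIntegrable
  have hui : Integrable u := by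
    refine (integrable_indicator_iff measurableSet_closedBall).2 ?_
    have h1 : LocallyIntegrable (fun x => (⟪z, f' x⟫ : ℝ)) volume := by
      intro x
      obtain ⟨s, hs, hi⟩ := hw.2.1 x
      exact ⟨s, hs, hi.const_inner z⟩
    exact h1.integrableOn_isCompact (isCompact_closedBall _ _)
  have hb1 : ∀ j x, ‖mol (ρ j) a x‖ ≤ 1 := fun j x =>
    (hρ j).norm_mol_le x (Eventually.of_forall fun y _ => ha1 y)
  have hbsm : ∀ j, Continuous (mol (ρ j) a) := fun j => ((hρ j).contDiff_mol hal).continuous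
  have hbs : ∀ j x, R + 1 < ‖x‖ → mol (ρ j) a x = 0 := by
    intro j x hx
    have := (hρ j).norm_mol_le (h := a) (m := 0) x (Eventually.of_forall fun y hy => ?_)
    · simpa using this
    · rw [haR y, norm_zero]
      have h1 : (1 : ℝ) / ((j : ℝ) + 1) ≤ 1 := by
        rw [div_le_one (by positivity)]; linarith [(Nat.cast_nonneg j : (0:ℝ) ≤ j)]
      have h2 : ‖x‖ - ‖y‖ ≤ ‖x - y‖ := norm_sub_norm_le x y
      linarith
  have hlim := hae a hal
  have hL : ∫ x in A, ⟪z, f' x⟫ = ∫ x, a x * u x := by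
    rw [← integral_indicator hA]
    refine integral_congr_ae (Eventually.of_forall fun x => ?_)
    by_cases hx : x ∈ A
    · have hxQ : x ∈ Q := by have := hAR hx; simp [hQ] at this ⊢; linarith
      simp [ha, hu, hx, hxQ]
    · simp [ha, hx]
  rw [hL]
  refine le_of_forall_pos_le_add fun η' hη' => ?_
  set V := volume.real (Metric.closedBall (0 : En n) (R + 1)) with hV
  have hV0 : 0 ≤ V := measureReal_nonneg
  set η := η' / 3 with hη
  have hη0 : 0 < η := by positivity
  -- approximating `u` in `L¹` by a continuous `h` gives continuity of translations of `u` in `L¹`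
  obtain ⟨h, hhc, hhi, hhcont, hhint⟩ := hui.exists_hasCompactSupport_integral_sub_le hη0
  obtain ⟨τ, hτ, huc⟩ := Metric.uniformContinuous_iff.1
    (hhc.uniformContinuous_of_continuous hhcont) (η / (V + 1)) (by positivity)
  obtain ⟨s, hs0, hs1, hsτ⟩ : ∃ s : ℝ, 0 < s ∧ s * ‖z‖ ≤ 1 ∧ s * ‖z‖ < τ := by
    refine ⟨min 1 τ / (2 * (‖z‖ + 1)), by positivity, ?_, ?_⟩
    · have h1 : min 1 τ ≤ 1 := min_le_left _ _
      rw [div_mul_eq_mul_div, div_le_one (by positivity)]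
      nlinarith [norm_nonneg z]
    · have h1 : min 1 τ ≤ τ := min_le_right _ _
      rw [div_mul_eq_mul_div, div_lt_iff₀ (by positivity)]
      nlinarith [norm_nonneg z]
  have key := translate_meas hf hw hρ hae ham ha1 haR (s • z)
    (c := fun j => s * ∫ x, mol (ρ j) a x * u x) (c₀ := s * ∫ x, a x * u x)
    (K := s * η') ?_ ?_
  · have z1 : ∫ x, f x * a x = 0 := by
      refine integral_eq_zero_of_ae ?_
      filter_upwards [hfA] with x hx
      by_cases hxA : x ∈ A
      · simp [hx hxA]
      · simp [ha, hxA]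
    have z2 : 0 ≤ ∫ x, f x * a (x + s • z) :=
      integral_nonneg fun x => mul_nonneg (hf0 x) (indicator_nonneg (by simp) _)
    rw [z1] at key
    have := (abs_le.1 key).2
    nlinarith
  · refine Tendsto.const_mul s (tendsto_integral_of_dominated_convergence (fun x => ‖u x‖)
      (fun j => ((hbsm j).aestronglyMeasurable).mul hui.1) hui.norm
      (fun j => Eventually.of_forall fun x => ?_) ?_)
    · rw [norm_mul]; exact mul_le_of_le_one_left (norm_nonneg _) (hb1 j x)
    · filter_upwards [hlim] with x hx using hx.mul_const _
  · refine Eventually.of_forall fun j t ht => ?_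
    set b := mol (ρ j) a with hb
    set v := t • s • z with hv
    have hvn : ‖v‖ ≤ s * ‖z‖ := by
      rw [hv, norm_smul, norm_smul, Real.norm_eq_abs, Real.norm_eq_abs, abs_of_nonneg ht.1,
        abs_of_pos hs0]
      exact mul_le_of_le_one_left (by positivity) ht.2
    have e1 : ∫ x, b (x + v) * ⟪s • z, f' x⟫ = s * ∫ x, b (x + v) * u x := by
      rw [← integral_const_mul]
      refine integral_congr_ae (Eventually.of_forall fun x => ?_)
      by_cases hx : x ∈ Q
      · simp [hu, hx, inner_smul_left]; ring
      · have : b (x + v) = 0 := by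
          refine hbs j _ ?_
          have h1 : R + 2 < ‖x‖ := by simpa [hQ] using hx
          have h2 : ‖x‖ ≤ ‖x + v‖ + ‖v‖ := by
            simpa using norm_sub_le (x + v) v
          linarith
        simp [this]
    have hbv : Continuous fun x => b (x + v) := (hbsm j).comp (continuous_id.add continuous_const)
    have i1 : Integrable fun x => b (x + v) * u x :=
      hui.bdd_mul (c := 1) hbv.aestronglyMeasurable (Eventually.of_forall fun x => hb1 j _)
    have i2 : Integrable fun x => b (x + v) * h x :=
      hhcont.integrable_of_hasCompactSupport hhc |>.bdd_mul (c := 1)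
        hbv.aestronglyMeasurable (Eventually.of_forall fun x => hb1 j _)
    have i3 : Integrable fun x => b x * u x :=
      hui.bdd_mul (c := 1) (hbsm j).aestronglyMeasurable (Eventually.of_forall fun x => hb1 j _)
    have i4 : Integrable fun x => b x * h x :=
      hhcont.integrable_of_hasCompactSupport hhc |>.bdd_mul (c := 1)
        (hbsm j).aestronglyMeasurable (Eventually.of_forall fun x => hb1 j _)
    have hhI := hhcont.integrable_of_hasCompactSupport hhc (μ := volume)
    have i5 : Integrable fun x => b x * h (x - v) :=
      (hhI.comp_sub_right v).bdd_mul (c := 1)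
        (hbsm j).aestronglyMeasurable (Eventually.of_forall fun x => hb1 j _)
    have d1 : |(∫ x, b (x + v) * u x) - ∫ x, b (x + v) * h x| ≤ η := by
      rw [← integral_sub i1 i2, ← Real.norm_eq_abs]
      refine (norm_integral_le_of_norm_le (hui.sub hhI).norm
        (Eventually.of_forall fun x => ?_)).trans hhi
      rw [← mul_sub, norm_mul]
      exact mul_le_of_le_one_left (norm_nonneg _) (hb1 j _)
    have d2 : |(∫ x, b x * u x) - ∫ x, b x * h x| ≤ η := by
      rw [← integral_sub i3 i4, ← Real.norm_eq_abs]
      refine (norm_integral_le_of_norm_le (hui.sub hhI).norm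
        (Eventually.of_forall fun x => ?_)).trans hhi
      rw [← mul_sub, norm_mul]
      exact mul_le_of_le_one_left (norm_nonneg _) (hb1 j _)
    have d3 : |(∫ x, b (x + v) * h x) - ∫ x, b x * h x| ≤ η := by
      have e2 : ∫ x, b (x + v) * h x = ∫ x, b x * h (x - v) := by
        rw [← integral_add_right_eq_self (fun x => b x * h (x - v)) v]
        simp
      rw [e2, ← integral_sub i5 i4, ← Real.norm_eq_abs]
      have i6 : Integrable ((Metric.closedBall (0 : En n) (R + 1)).indicator
          fun _ => η / (V + 1)) :=
        (integrable_indicator_iff measurableSet_closedBall).2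
          (integrableOn_const measure_closedBall_lt_top.ne)
      refine (norm_integral_le_of_norm_le i6 (Eventually.of_forall fun x => ?_)).trans ?_
      · by_cases hx : x ∈ Metric.closedBall (0 : En n) (R + 1)
        · rw [indicator_of_mem hx, ← mul_sub, norm_mul]
          refine (mul_le_of_le_one_left (norm_nonneg _) (hb1 j _)).trans ?_
          have := huc (a := x - v) (b := x) (by simp; linarith)
          rw [dist_eq_norm] at this
          exact this.le
        · rw [indicator_of_notMem hx, show b x = 0 from hbs j x (by simpa using hx)]; simp
      · rw [integral_indicator measurableSet_closedBall, setIntegral_const, smul_eq_mul, ← hV,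
          mul_div_assoc', div_le_iff₀ (by positivity)]
        nlinarith
    change |(∫ x, b (x + v) * ⟪s • z, f' x⟫) - s * ∫ x, b x * u x| ≤ s * η'
    rw [e1, ← mul_sub, abs_mul, abs_of_pos hs0]
    refine mul_le_mul_of_nonneg_left ?_ hs0.le
    rw [abs_le] at d1 d2 d3 ⊢
    constructor <;> linarith [d1.1, d1.2, d2.1, d2.2, d3.1, d3.2]

/-- The weak gradient of a nonnegative function vanishes almost everywhere on its zero set. -/
lemma grad_eq_zero_of_eq_zero (hf : Integrable f) (hf0 : ∀ x, 0 ≤ f x) (hw : HasWeakGrad f f') :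
    ∀ᵐ x, f x = 0 → f' x = 0 := by
  obtain ⟨C, -, ρ, hρ, hae⟩ := exists_moll n
  set Z : Set (En n) := {x | hf.1.mk f x = 0} with hZ
  have hZm : MeasurableSet Z := hf.1.stronglyMeasurable_mk.measurable (measurableSet_singleton 0)
  have hfz : ∀ᵐ x, x ∈ Z → f x = 0 := by
    filter_upwards [hf.1.ae_eq_mk] with x hx hxZ
    rw [hx]; exact hxZ
  have h0 : ∀ A : Set (En n), MeasurableSet A → ∀ R, A ⊆ Metric.closedBall 0 R → A ⊆ Z →
      ∀ z, ∫ x in A, ⟪z, f' x⟫ = 0 := by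
    intro A hA R hR hAZ z
    have hfA : ∀ᵐ x, x ∈ A → f x = 0 := by
      filter_upwards [hfz] with x hx hxA using hx (hAZ hxA)
    have h1 := setIntegral_inner_grad_nonpos hf hf0 hw hρ hae hA hR hfA z
    have h2 := setIntegral_inner_grad_nonpos hf hf0 hw hρ hae hA hR hfA (-z)
    simp only [inner_neg_left, integral_neg] at h2
    linarith
  have h1 : ∀ (i : Fin n) (k : ℕ), ∀ᵐ x,
      (Metric.closedBall 0 (k : ℝ) ∩ Z).indicator
        (fun x => (⟪EuclideanSpace.single i (1:ℝ), f' x⟫ : ℝ)) x = 0 := by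
    intro i k
    have hB : MeasurableSet (Metric.closedBall (0 : En n) k ∩ Z) :=
      measurableSet_closedBall.inter hZm
    refine Integrable.ae_eq_zero_of_forall_setIntegral_eq_zero ?_ ?_
    · refine (integrable_indicator_iff hB).2 ?_
      have := (hw.2.1.integrableOn_isCompact (isCompact_closedBall (0 : En n) k)).mono_set
        (inter_subset_left (t := Z))
      exact Integrable.const_inner _ this
    · intro s hs _
      rw [setIntegral_indicator hB]
      exact h0 _ (hs.inter hB) k (fun x hx => hx.2.1) (fun x hx => hx.2.2) _
  have h2 := ae_all_iff.2 fun i => ae_all_iff.2 (h1 i)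
  filter_upwards [h2, hf.1.ae_eq_mk] with x hx hxm hx0
  obtain ⟨k, hk⟩ := exists_nat_ge ‖x‖
  ext i
  have := hx i k
  rw [indicator_of_mem] at this
  · simpa [EuclideanSpace.inner_single_left] using this
  · exact ⟨by simpa using hk, by simp [hZ, ← hxm, hx0]⟩
end

/-! ### The commutator estimate -/

section
variable {n : ℕ} {f : En n → ℝ} {f' : En n → En n}

/-- The commutator estimate: testing `f ∇(ρ * h)` with a bounded measurable field `p` amounts to
testing the weighted variation of `h` with the smooth field `ρ * p`, up to an error controlled by
the weak gradient of `f` on the set where `p` is felt. -/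
lemma commutator_bound (hf : Integrable f) (hw : HasWeakGrad f f') {C : ℝ} {ρs : ℕ → En n → ℝ}
    (hρs : ∀ j : ℕ, IsMoll C (1 / ((j : ℝ) + 1)) (ρs j))
    (hae : ∀ h : En n → ℝ, LocallyIntegrable h volume →
      ∀ᵐ x, Tendsto (fun j => mol (ρs j) h x) atTop (𝓝 (h x)))
    {δ : ℝ} {ρ : En n → ℝ} (hρ : IsMoll C δ ρ)
    {p : En n → En n} {P R M : ℝ} (hpm : AEStronglyMeasurable p volume) (hP : ∀ x, ‖p x‖ ≤ P)
    (hpR : ∀ x, R < ‖x‖ → p x = 0) {h : En n → ℝ} (hhm : AEStronglyMeasurable h volume)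
    (hM : ∀ x, |h x| ≤ M) {m : En n → ℝ}
    (hm : ∀ x y, ‖x - y‖ < 2 * δ → ‖p x‖ ≤ m y) (hmi : Integrable fun y => m y * ‖f' y‖) :
    -(∫ x, f x * fderiv ℝ (mol ρ h) x (p x)) ≤
      (∫ y, h y * (f y * dvg (mol ρ p) y + ⟪mol ρ p y, f' y⟫)) +
        (1 + C) * M * ∫ y, m y * ‖f' y‖ := by
  have hM0 : 0 ≤ M := (abs_nonneg _).trans (hM 0)
  have hP0 : 0 ≤ P := (norm_nonneg _).trans (hP 0)
  have hδ := hρ.pos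
  obtain ⟨B, hB0, hB⟩ := hρ.fderiv_bdd
  set I := ∫ y, m y * ‖f' y‖ with hI
  have hm0 : ∀ y, 0 ≤ m y := fun y => (norm_nonneg _).trans (hm y y (by simpa using hδ))
  have hI0 : 0 ≤ I := integral_nonneg fun y => mul_nonneg (hm0 y) (norm_nonneg _)
  have hhl : LocallyIntegrable h volume := by
    intro x
    refine ⟨Metric.closedBall x 1, Metric.closedBall_mem_nhds x one_pos, ?_⟩
    exact Measure.integrableOn_of_bounded (M := M) measure_closedBall_lt_top.ne hhm
      (Eventually.of_forall hM)
  have hpi : Integrable p := by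
    have h1 : IntegrableOn p (Metric.closedBall 0 R) :=
      Measure.integrableOn_of_bounded (M := P) measure_closedBall_lt_top.ne hpm
        (Eventually.of_forall hP)
    exact h1.integrable_of_forall_notMem_eq_zero fun x hx => hpR x (by simpa using hx)
  have hpl := hpi.locallyIntegrable
  set k : En n → En n → ℝ := fun x y => fderiv ℝ ρ (x - y) (p x) * h y with hk
  -- the kernel is bounded and vanishes unless both variables stay in a fixed ball
  set D : Set (En n) := Metric.closedBall 0 (R + δ) with hD
  have hkb : ∀ x y, |k x y| ≤ B * P * M := by
    intro x y
    rw [hk, abs_mul]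
    gcongr
    · exact ((fderiv ℝ ρ (x - y)).le_opNorm _).trans (by gcongr; exacts [hB _, hP _])
    · exact hM y
  have hk1 : ∀ x y, x ∉ D → k x y = 0 := by
    intro x y hx
    have : p x = 0 := hpR x (by simp [hD] at hx; linarith)
    simp [hk, this]
  have hk2 : ∀ x y, y ∉ D → k x y = 0 := by
    intro x y hy
    by_cases hxy : δ ≤ ‖x - y‖
    · simp [hk, hρ.fderiv_supp' hxy]
    · have : p x = 0 := hpR x (by
        simp [hD] at hy
        have := norm_sub_norm_le y x
        rw [norm_sub_rev] at this
        linarith)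
      simp [hk, this]
  have hkm : AEStronglyMeasurable (fun q : En n × En n => k q.1 q.2)
      ((volume : Measure (En n)).prod volume) := by
    refine AEStronglyMeasurable.mul ?_ hhm.comp_snd
    have h1 : AEStronglyMeasurable (fun q : En n × En n => fderiv ℝ ρ (q.1 - q.2))
        ((volume : Measure (En n)).prod volume) :=
      (hρ.cont_fderiv.comp (continuous_fst.sub continuous_snd)).aestronglyMeasurable
    exact (ContinuousLinearMap.apply ℝ ℝ).aestronglyMeasurable_comp₂ hpm.comp_fst h1
  have hDi : Integrable (D.indicator fun _ : En n => (1 : ℝ)) :=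
    (integrable_indicator_iff measurableSet_closedBall).2
      (integrableOn_const measure_closedBall_lt_top.ne)
  have i1 : Integrable (fun q : En n × En n => f q.1 * k q.1 q.2)
      ((volume : Measure (En n)).prod volume) := by
    refine ((hf.norm.mul_prod hDi).mul_const (B * P * M)).mono'
      (hf.1.comp_fst.mul hkm) (Eventually.of_forall fun q => ?_)
    by_cases hq : q.2 ∈ D
    · rw [norm_mul, indicator_of_mem hq, mul_one]
      gcongr; exact hkb _ _
    · simp [hk2 _ _ hq, hq]
  have i2 : Integrable (fun q : En n × En n => f q.2 * k q.1 q.2)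
      ((volume : Measure (En n)).prod volume) := by
    refine ((hDi.mul_prod hf.norm).mul_const (B * P * M)).mono'
      (hf.1.comp_snd.mul hkm) (Eventually.of_forall fun q => ?_)
    by_cases hq : q.1 ∈ D
    · rw [norm_mul, indicator_of_mem hq, one_mul]
      gcongr; exact hkb _ _
    · simp [hk1 _ _ hq, hq]
  have e1 : ∫ x, f x * fderiv ℝ (mol ρ h) x (p x) = ∫ x, ∫ y, f x * k x y := by
    refine integral_congr_ae (Eventually.of_forall fun x => ?_)
    simp only
    rw [hρ.fderiv_mol hhl, integral_const_mul]
    rfl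
  have e2 : ∫ x, ∫ y, f y * k x y = - ∫ y, h y * (f y * dvg (mol ρ p) y) := by
    rw [integral_integral_swap i2, ← integral_neg]
    refine integral_congr_ae (Eventually.of_forall fun y => ?_)
    simp only
    rw [hρ.dvg_mol hpl, ← mul_assoc, ← integral_const_mul, ← integral_neg]
    refine integral_congr_ae (Eventually.of_forall fun x => ?_)
    simp only [hk]
    rw [← neg_sub x y, hρ.fderiv_neg]; ring
  set F : En n × En n → ℝ := fun q => (f q.1 - f q.2) * k q.1 q.2 with hF
  have i3 : Integrable F ((volume : Measure (En n)).prod volume) := by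
    refine (i1.sub i2).congr (Eventually.of_forall fun q => ?_)
    simp [hF, sub_mul]
  have e3 : ∫ x, ∫ y, F (x, y) = (∫ x, ∫ y, f x * k x y) - ∫ x, ∫ y, f y * k x y := by
    rw [← integral_sub i1.integral_prod_left i2.integral_prod_left]
    refine integral_congr_ae ?_
    filter_upwards [i1.prod_right_ae, i2.prod_right_ae] with x h1 h2
    rw [← integral_sub h1 h2]
    simp [hF, sub_mul]
  have i4 : Integrable (fun q : En n × En n => F (q.1, q.1 + q.2))
      ((volume : Measure (En n)).prod volume) :=
    (measurePreserving_prod_add volume volume).integrable_comp_of_integrable i3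
  have e4 : ∫ x, ∫ y, F (x, y) = ∫ z, ∫ x, F (x, x + z) := by
    rw [← integral_integral_swap (f := fun x z => F (x, x + z)) i4]
    refine integral_congr_ae (Eventually.of_forall fun x => ?_)
    exact (integral_add_left_eq_self (fun y => F (x, y)) x).symm
  have hgi : Integrable fun z => ‖fderiv ℝ ρ z‖ :=
    hρ.cont_fderiv.norm.integrable_of_hasCompactSupport (hρ.cpt.fderiv ℝ).norm
  have hgi2 : Integrable fun z => ‖fderiv ℝ ρ (-z)‖ * (δ * M * I) := (hgi.comp_neg).mul_const _
  have b1 : ‖∫ x, ∫ y, F (x, y)‖ ≤ C * M * I := by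
    rw [e4]
    refine (norm_integral_le_of_norm_le hgi2 (Eventually.of_forall fun z => ?_)).trans ?_
    · by_cases hz : δ ≤ ‖z‖
      · have : fderiv ℝ ρ (-z) = 0 := hρ.fderiv_supp' (by simpa using hz)
        have h2 : ∀ x, F (x, x + z) = 0 := fun x => by
          simp [hF, hk, this]
        simp [h2, this]
      · have hz := not_le.1 hz
        have h1 := translate_bound hf hw hρs hae
          (a := fun x => fderiv ℝ ρ (-z) (p x) * h (x + z)) (A := B * P * M) (R := R)
          (((fderiv ℝ ρ (-z)).continuous.comp_aestronglyMeasurable hpm).mul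
            (hhm.comp_quasiMeasurePreserving
              (measurePreserving_add_right volume z).quasiMeasurePreserving))
          (fun x => by simpa [hk] using hkb x (x + z))
          (fun x hx => by simp [hpR x hx]) (-z) (r := 2 * δ) (by rw [norm_neg]; linarith)
          (m := fun y => ‖fderiv ℝ ρ (-z)‖ * M * m y)
          (fun x y hxy => by
            rw [abs_mul]
            calc _ ≤ (‖fderiv ℝ ρ (-z)‖ * ‖p x‖) * M := by
                  gcongr
                  · exact (fderiv ℝ ρ (-z)).le_opNorm _
                  · exact hM _
              _ ≤ (‖fderiv ℝ ρ (-z)‖ * m y) * M := by gcongr; exact hm x y hxy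
              _ = _ := by ring)
          (by simpa only [mul_assoc] using hmi.const_mul (‖fderiv ℝ ρ (-z)‖ * M))
        have h2 : ∀ x, F (x, x + z) =
            fderiv ℝ ρ (-z) (p x) * h (x + z) * (f x - f (x - -z)) := by
          intro x
          simp [hF, hk]; ring
        simp_rw [h2]
        rw [Real.norm_eq_abs]
        refine h1.trans ?_
        simp_rw [mul_assoc, integral_const_mul]
        rw [norm_neg, ← hI]
        calc ‖z‖ * (‖fderiv ℝ ρ (-z)‖ * (M * I)) ≤ δ * (‖fderiv ℝ ρ (-z)‖ * (M * I)) := by gcongr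
          _ = _ := by ring
    · rw [integral_mul_const, integral_neg_eq_self (fun z => ‖fderiv ℝ ρ z‖) volume]
      calc _ = (δ * ∫ x, ‖fderiv ℝ ρ x‖) * (M * I) := by ring
        _ ≤ C * (M * I) := by gcongr; exact hρ.grad
        _ = _ := by ring
  have hΨm : ∀ y, ‖mol ρ p y‖ ≤ m y := fun y =>
    hρ.norm_mol_le y (Eventually.of_forall fun x hx => hm x y (by
      rw [norm_sub_rev]; linarith))
  have hΨc : Continuous (mol ρ p) := (hρ.contDiff_mol hpl).continuous
  have i5 : Integrable fun y => h y * ⟪mol ρ p y, f' y⟫ := by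
    refine (hmi.const_mul M).mono' (hhm.mul
      (hΨc.aestronglyMeasurable.inner hw.2.1.aestronglyMeasurable))
      (Eventually.of_forall fun y => ?_)
    rw [norm_mul]
    gcongr
    · exact hM y
    · exact (norm_inner_le_norm _ _).trans (by gcongr; exact hΨm y)
  have b2 : ‖∫ y, h y * ⟪mol ρ p y, f' y⟫‖ ≤ M * I := by
    rw [hI, ← integral_const_mul]
    refine norm_integral_le_of_norm_le (hmi.const_mul M) (Eventually.of_forall fun y => ?_)
    rw [norm_mul]
    gcongr
    · exact hM y
    · exact (norm_inner_le_norm _ _).trans (by gcongr; exact hΨm y)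
  have i6 : Integrable fun y => h y * (f y * dvg (mol ρ p) y) := by
    have := i2.integral_prod_right.neg
    refine this.congr (Eventually.of_forall fun y => ?_)
    simp only [Pi.neg_apply]
    rw [hρ.dvg_mol hpl, ← mul_assoc, ← integral_const_mul, ← integral_neg]
    refine integral_congr_ae (Eventually.of_forall fun x => ?_)
    simp only [hk]
    rw [← neg_sub x y, hρ.fderiv_neg]; ring
  have e5 : ∫ y, h y * (f y * dvg (mol ρ p) y + ⟪mol ρ p y, f' y⟫) =
      (∫ y, h y * (f y * dvg (mol ρ p) y)) + ∫ y, h y * ⟪mol ρ p y, f' y⟫ := by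
    rw [← integral_add i6 i5]; simp_rw [mul_add]
  rw [e1, e5]
  rw [Real.norm_eq_abs, abs_le] at b1 b2
  have := b1.1; have := b2.1
  linarith
end

/-! ### Local approximation, and the set where `h` is locally constant -/

section
variable {n : ℕ} {f : En n → ℝ} {f' : En n → En n}

/-- The union of all open sets on which `h` is constant. -/
def locConst (h : En n → ℝ) : Set (En n) :=
  ⋃₀ {O : Set (En n) | IsOpen O ∧ ∃ c : ℝ, ∀ x ∈ O, h x = c}

/-- The points around which `h` is constant on the ball of radius `r`. -/
def constBall (h : En n → ℝ) (r : ℝ) : Set (En n) :=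
  {x | ∀ y ∈ Metric.ball x r, ∀ z ∈ Metric.ball x r, h y = h z}

lemma isOpen_locConst (h : En n → ℝ) : IsOpen (locConst h) := isOpen_sUnion fun _ hO => hO.1

lemma isClosed_constBall (h : En n → ℝ) (r : ℝ) : IsClosed (constBall h r) := by
  rw [← isOpen_compl_iff, isOpen_iff_mem_nhds]
  intro x hx
  simp only [constBall, mem_compl_iff, mem_ofPred_eq, not_forall] at hx
  obtain ⟨y, hy, z, hz, hyz⟩ := hx
  filter_upwards [Metric.isOpen_ball.mem_nhds (Metric.mem_ball_comm.1 hy),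
    Metric.isOpen_ball.mem_nhds (Metric.mem_ball_comm.1 hz)] with w hw1 hw2 hw3
  exact hyz (hw3 y (Metric.mem_ball_comm.1 hw1) z (Metric.mem_ball_comm.1 hw2))

lemma mem_constBall_of_mem_locConst {h : En n → ℝ} {x : En n} (hx : x ∈ locConst h) :
    ∃ r > 0, ∀ s ≤ r, x ∈ constBall h s := by
  obtain ⟨O, ⟨hO, c, hc⟩, hxO⟩ := hx
  obtain ⟨r, hr, hrO⟩ := Metric.isOpen_iff.1 hO x hxO
  refine ⟨r, hr, fun s hs y hy z hz => ?_⟩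
  rw [hc y (hrO (Metric.ball_subset_ball hs hy)), hc z (hrO (Metric.ball_subset_ball hs hz))]

lemma mem_locConst_of_mem_constBall {h : En n → ℝ} {x : En n} {r : ℝ} (hr : 0 < r)
    (hx : x ∈ constBall h r) : x ∈ locConst h :=
  ⟨Metric.ball x r, ⟨Metric.isOpen_ball, h x, fun y hy => hx y hy x (Metric.mem_ball_self hr)⟩,
    Metric.mem_ball_self hr⟩

lemma locallyIntegrable_of_bdd {F : Type*} [NormedAddCommGroup F] {h : En n → F} {M : ℝ}
    (hhm : AEStronglyMeasurable h volume) (hM : ∀ x, ‖h x‖ ≤ M) : LocallyIntegrable h volume := by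
  intro x
  refine ⟨Metric.closedBall x 1, Metric.closedBall_mem_nhds x one_pos, ?_⟩
  exact Measure.integrableOn_of_bounded (M := M) measure_closedBall_lt_top.ne hhm
    (Eventually.of_forall hM)

/-- A mollification is stationary at the points around which `h` is constant. -/
lemma IsMoll.fderiv_mol_eq_zero {C δ : ℝ} {ρ : En n → ℝ} (hρ : IsMoll C δ ρ) {h : En n → ℝ}
    (hh : LocallyIntegrable h volume) {x : En n} (hx : x ∈ constBall h δ) :
    fderiv ℝ (mol ρ h) x = 0 := by
  have hx0 : ∀ y, ‖x - y‖ < δ → h y = h x := fun y hy =>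
    hx y (by rwa [Metric.mem_ball, dist_eq_norm, norm_sub_rev]) x (Metric.mem_ball_self hρ.pos)
  ext v
  have hc : LocallyIntegrable (fun _ : En n => h x) volume := locallyIntegrable_const _
  have h1 : (mol ρ fun _ : En n => h x) = fun _ => h x := by
    ext z
    simp only [mol, smul_eq_mul, integral_mul_const, hρ.integral_sub, one_mul]
  have h2 := hρ.fderiv_mol hc x v
  rw [h1] at h2
  rw [hρ.fderiv_mol hh]
  simp only [fderiv_fun_const, Pi.zero_apply, zero_apply] at h2
  rw [zero_apply, h2]
  refine integral_congr_ae (Eventually.of_forall fun y => ?_)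
  by_cases hy : δ ≤ ‖x - y‖
  · simp [hρ.fderiv_supp' hy]
  · simp [hx0 y (not_le.1 hy)]

lemma tendsto_radius (c : ℝ) : Tendsto (fun j : ℕ => c * (1 / ((j : ℝ) + 1))) atTop (𝓝 0) := by
  simpa using (tendsto_one_div_add_atTop_nhds_zero_nat (𝕜 := ℝ)).const_mul c

lemma integrableOn_of_isBounded (hw : HasWeakGrad f f') {U : Set (En n)}
    (hUb : Bornology.IsBounded U) : IntegrableOn f' U :=
  (hw.2.1.integrableOn_isCompact hUb.isCompact_closure).mono_set subset_closure

/-- One piece of the construction: near the support of a cutoff `ζ`, a sufficiently fine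
mollification `G` of `h` is close to `h`, and the contribution of `ζ ∇G` to the variation is
controlled by testing `h` with a field `Ψ` essentially bounded by `ζ`. -/
lemma local_step (hf0 : ∀ x, 0 ≤ f x) (hf : Integrable f) (hw : HasWeakGrad f f') {C : ℝ}
    (hC : 0 ≤ C) {ρs : ℕ → En n → ℝ}
    (hρs : ∀ j : ℕ, IsMoll C (1 / ((j : ℝ) + 1)) (ρs j))
    (hae : ∀ h : En n → ℝ, LocallyIntegrable h volume →
      ∀ᵐ x, Tendsto (fun j => mol (ρs j) h x) atTop (𝓝 (h x)))
    {U : Set (En n)} (hU : IsOpen U) (hUb : Bornology.IsBounded U)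
    {h : En n → ℝ} {M : ℝ} (hhm : AEStronglyMeasurable h volume) (hM : ∀ x, |h x| ≤ M)
    {ζ : En n → ℝ} (hζ : ContDiff ℝ ∞ ζ) (hζc : HasCompactSupport ζ) (hζU : tsupport ζ ⊆ U)
    (hζ0 : ∀ x, 0 ≤ ζ x) {η : ℝ} (hη : 0 < η) :
    ∃ G : En n → ℝ, ContDiff ℝ ∞ G ∧ (∀ x, |G x| ≤ M) ∧
      ∫ x, f x * ((‖fderiv ℝ ζ x‖ + ζ x) * |G x - h x|) ≤ η ∧
      ∀ φ : En n → En n, ContDiff ℝ 1 φ → (∀ x, ‖φ x‖ ≤ 1) →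
        ∃ Ψ : En n → En n, ContDiff ℝ 1 Ψ ∧ HasCompactSupport Ψ ∧ tsupport Ψ ⊆ U ∧
          (∀ y, ‖Ψ y‖ ≤ ζ y + η) ∧
          -(∫ x, f x * (ζ x * fderiv ℝ G x (φ x))) ≤
            (∫ y, h y * (f y * dvg Ψ y + ⟪Ψ y, f' y⟫)) +
              (1 + C) * M * ((∫ y, ζ y * ((locConst h)ᶜ.indicator (fun y => ‖f' y‖) y)) + η) := by
  classical
  have hM0 : 0 ≤ M := (abs_nonneg _).trans (hM 0)
  have hhl : LocallyIntegrable h volume := locallyIntegrable_of_bdd hhm hM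
  have hmeas : ∀ j, Continuous (mol (ρs j) h) := fun j => ((hρs j).contDiff_mol hhl).continuous
  have hbd : ∀ j x, |mol (ρs j) h x| ≤ M := fun j x => by
    rw [← Real.norm_eq_abs]
    exact (hρs j).norm_mol_le x (Eventually.of_forall fun y _ => hM y)
  have hζ' : Continuous (fderiv ℝ ζ) := hζ.continuous_fderiv (by simp)
  obtain ⟨B, hB⟩ := (hζc.fderiv ℝ).exists_bound_of_continuous hζ'
  obtain ⟨Z, hZ⟩ := hζc.exists_bound_of_continuous hζ.continuous
  have hB0 : 0 ≤ B := (norm_nonneg _).trans (hB 0)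
  have hZ0 : 0 ≤ Z := (norm_nonneg _).trans (hZ 0)
  have hf'U : Integrable (U.indicator fun y => ‖f' y‖) :=
    (integrable_indicator_iff hU.measurableSet).2 (integrableOn_of_isBounded hw hUb).norm
  -- convergence in weighted `L¹`
  have T1 : Tendsto (fun j => ∫ x, f x * ((‖fderiv ℝ ζ x‖ + ζ x) * |mol (ρs j) h x - h x|)) atTop
      (𝓝 (∫ x : En n, (0 : ℝ))) := by
    refine tendsto_integral_of_dominated_convergence (fun x => f x * ((B + Z) * (2 * M)))
      (fun j => ?_) (hf.mul_const _) (fun j => Eventually.of_forall fun x => ?_) ?_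
    · refine hf.aestronglyMeasurable.mul (((hζ'.norm.add hζ.continuous).aestronglyMeasurable).mul ?_)
      exact ((hmeas j).aestronglyMeasurable.sub hhm).norm
    · have h1 : |mol (ρs j) h x - h x| ≤ 2 * M :=
        (abs_sub _ _).trans (by linarith [hbd j x, hM x])
      have h2 := hζ0 x
      rw [Real.norm_of_nonneg (by have := hf0 x; positivity)]
      refine mul_le_mul_of_nonneg_left ?_ (hf0 x)
      gcongr
      · exact hB x
      · exact (le_abs_self _).trans (hZ x)
    · filter_upwards [hae h hhl] with x hx
      have h1 : Tendsto (fun j => |mol (ρs j) h x - h x|) atTop (𝓝 0) := by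
        simpa using (hx.sub_const (h x)).abs
      simpa using (h1.const_mul (‖fderiv ℝ ζ x‖ + ζ x)).const_mul (f x)
  -- the sets where `h` is constant on balls exhaust `locConst h`
  set q : ℕ → En n → ℝ := fun j y =>
    ζ y * ((constBall h (3 * (1 / ((j : ℝ) + 1))))ᶜ.indicator (U.indicator fun y => ‖f' y‖) y)
    with hq
  have hqi : ∀ j : ℕ, Integrable (fun y =>
      ((constBall h (3 * (1 / ((j : ℝ) + 1))))ᶜ.indicator (U.indicator fun y => ‖f' y‖) y)) :=
    fun j : ℕ => hf'U.indicator (isClosed_constBall h _).measurableSet.compl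
  have T2 : Tendsto (fun j => ∫ y, q j y) atTop
      (𝓝 (∫ y, ζ y * ((locConst h)ᶜ.indicator (fun y => ‖f' y‖) y))) := by
    refine tendsto_integral_of_dominated_convergence (fun x => Z * U.indicator (fun y => ‖f' y‖) x)
      (fun j => ?_) (hf'U.const_mul _) (fun j => Eventually.of_forall fun x => ?_) ?_
    · exact hζ.continuous.aestronglyMeasurable.mul (hqi j).aestronglyMeasurable
    · have h0 : 0 ≤ U.indicator (fun y => ‖f' y‖) x := indicator_nonneg (fun _ _ => norm_nonneg _) _
      simp only [hq, norm_mul]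
      refine mul_le_mul (hZ x) ?_ (norm_nonneg _) hZ0
      refine (norm_indicator_le_norm_self _ _).trans ?_
      rw [Real.norm_of_nonneg h0]
    · refine Eventually.of_forall fun x => ?_
      by_cases hxU : x ∈ U
      swap
      · have : ζ x = 0 := image_eq_zero_of_notMem_tsupport fun hx => hxU (hζU hx)
        simp [hq, this]
      refine tendsto_const_nhds.congr' ?_
      by_cases hx : x ∈ locConst h
      · obtain ⟨r, hr, hrs⟩ := mem_constBall_of_mem_locConst hx
        filter_upwards [(tendsto_radius 3).eventually (ge_mem_nhds hr)] with j hj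
        simp only [hq]
        rw [indicator_of_notMem (by simpa using hx),
          indicator_of_notMem (by simpa using hrs _ hj)]
      · refine Eventually.of_forall fun j => ?_
        have : x ∉ constBall h (3 * (1 / ((j : ℝ) + 1))) := fun hc =>
          hx (mem_locConst_of_mem_constBall (by positivity) hc)
        simp only [hq]
        rw [indicator_of_mem (by exact hx), indicator_of_mem (by exact this),
          indicator_of_mem hxU]
  set I := ∫ y, ζ y * ((locConst h)ᶜ.indicator (fun y => ‖f' y‖) y) with hI
  set A := ∫ y, U.indicator (fun y => ‖f' y‖) y with hA
  have hA0 : 0 ≤ A := integral_nonneg fun y => indicator_nonneg (fun _ _ => norm_nonneg _) _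
  obtain ⟨η', hη', hη'1, hη'2⟩ : ∃ η' : ℝ, 0 < η' ∧ η' ≤ η ∧ η' * A ≤ η / 2 := by
    refine ⟨min η (η / 2 / (A + 1)), by positivity, min_le_left _ _, ?_⟩
    calc _ ≤ (η / 2 / (A + 1)) * A := by gcongr; exact min_le_right _ _
      _ ≤ (η / 2 / (A + 1)) * (A + 1) := by gcongr; linarith
      _ = _ := by field_simp
  obtain ⟨d, hd, hdζ⟩ := Metric.uniformContinuous_iff.1
    (hζc.uniformContinuous_of_continuous hζ.continuous) η' hη'
  obtain ⟨d2, hd2, hd2U⟩ := IsCompact.exists_cthickening_subset_open hζc hU hζU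
  have T1' := T1.eventually (ge_mem_nhds (by simpa using hη))
  have T2' := T2.eventually (ge_mem_nhds (show I < I + η / 2 by linarith))
  obtain ⟨j, hj1, hj2, hj3, hj4⟩ := (T1'.and (T2'.and (((tendsto_radius 2).eventually
    (ge_mem_nhds hd)).and ((tendsto_radius 2).eventually (ge_mem_nhds hd2))))).exists
  set δ : ℝ := 1 / ((j : ℝ) + 1) with hδ
  have hρ := hρs j
  have hδ0 : 0 < δ := hρ.pos
  refine ⟨mol (ρs j) h, hρ.contDiff_mol hhl, hbd j, hj1, fun φ hφ hφ1 => ?_⟩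
  -- cutting the field off where `∇G = 0` is what localizes the error outside `locConst h`
  set p : En n → En n := (constBall h δ)ᶜ.indicator fun x => ζ x • φ x with hp
  have hpm : AEStronglyMeasurable p volume :=
    ((hζ.continuous.smul hφ.continuous).aestronglyMeasurable).indicator
      (isClosed_constBall h _).measurableSet.compl
  have hpζ : ∀ x, ‖p x‖ ≤ ζ x := fun x => by
    refine (norm_indicator_le_norm_self _ _).trans ?_
    rw [norm_smul, Real.norm_of_nonneg (hζ0 x)]
    exact mul_le_of_le_one_right (hζ0 x) (hφ1 x)
  have hpZ : ∀ x, ‖p x‖ ≤ Z := fun x => (hpζ x).trans ((le_abs_self _).trans (hZ x))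
  have hp0 : ∀ x, x ∉ tsupport ζ → p x = 0 := fun x hx => by
    have := hpζ x
    rw [image_eq_zero_of_notMem_tsupport hx] at this
    exact norm_le_zero_iff.1 this
  obtain ⟨R, hR⟩ := hζc.isCompact.isBounded.subset_closedBall (0 : En n)
  have hpR : ∀ x, R < ‖x‖ → p x = 0 := fun x hx => hp0 x fun hc => by
    have := hR hc
    simp at this; linarith
  have hpl : LocallyIntegrable p volume := locallyIntegrable_of_bdd hpm hpZ
  -- a ball of radius `3 δ` contains every ball of radius `δ` centred at distance below `2 δ`
  set m : En n → ℝ := (constBall h (3 * δ))ᶜ.indicator (U.indicator fun y => ζ y + η') with hmdef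
  have hm0 : ∀ y, 0 ≤ m y := fun y =>
    indicator_nonneg (fun y _ => indicator_nonneg (fun y _ => by linarith [hζ0 y]) y) y
  have hm : ∀ x y, ‖x - y‖ < 2 * δ → ‖p x‖ ≤ m y := by
    intro x y hxy
    by_cases hpx : p x = 0
    · rw [hpx, norm_zero]; exact hm0 y
    have hxs : x ∈ tsupport ζ := by by_contra hc; exact hpx (hp0 x hc)
    have hxK : x ∉ constBall h δ := fun hc => hpx (by
      rw [hp]; exact indicator_of_notMem (by simpa using hc) _)
    have hyU : y ∈ U := hd2U <| Metric.mem_cthickening_of_dist_le y x d2 _ hxs (by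
      rw [dist_comm, dist_eq_norm]; linarith)
    have hyK : y ∉ constBall h (3 * δ) := fun hc => hxK fun a ha b hb => by
      have hs : Metric.ball x δ ⊆ Metric.ball y (3 * δ) :=
        Metric.ball_subset_ball' (by rw [dist_eq_norm]; linarith)
      exact hc a (hs ha) b (hs hb)
    have h1 : dist (ζ x) (ζ y) < η' := hdζ (by rw [dist_eq_norm]; linarith)
    rw [hmdef, indicator_of_mem (by exact hyK), indicator_of_mem hyU]
    rw [Real.dist_eq] at h1
    linarith [hpζ x, (abs_lt.1 h1).2]
  have hmeq : ∀ y, m y * ‖f' y‖ = q j y + η' *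
      ((constBall h (3 * δ))ᶜ.indicator (U.indicator fun y => ‖f' y‖) y) := by
    intro y
    simp only [hmdef, hq, indicator_apply]
    split_ifs <;> ring
  have hqj : Integrable (q j) := (hqi j).bdd_mul hζ.continuous.aestronglyMeasurable
    (Eventually.of_forall hZ)
  have hmi : Integrable fun y => m y * ‖f' y‖ := by
    simp_rw [hmeq]
    exact hqj.add ((hqi j).const_mul _)
  have hmI : ∫ y, m y * ‖f' y‖ ≤ I + η := by
    simp_rw [hmeq]
    rw [integral_add hqj ((hqi j).const_mul _), integral_const_mul]
    have h1 : (∫ y, (constBall h (3 * δ))ᶜ.indicator (U.indicator fun y => ‖f' y‖) y) ≤ A := by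
      refine integral_mono (hqi j) hf'U fun y => ?_
      exact indicator_le_self' (fun _ _ => indicator_nonneg (fun _ _ => norm_nonneg _) _) y
    have := mul_le_mul_of_nonneg_left h1 hη'.le
    linarith
  have key := commutator_bound hf hw hρs hae hρ hpm hpZ hpR hhm hM hm hmi
  have hts := hρ.tsupport_mol hp0
  refine ⟨mol (ρs j) p, (hρ.contDiff_mol hpl).of_le (by simp), ?_, ?_, fun y => ?_, ?_⟩
  · exact hζc.isCompact.cthickening.of_isClosed_subset (isClosed_tsupport _) hts
  · exact hts.trans ((Metric.cthickening_mono (by linarith) _).trans hd2U)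
  · refine hρ.norm_mol_le y (Eventually.of_forall fun x hxy => (hpζ x).trans ?_)
    have h1 : dist (ζ x) (ζ y) < η' := hdζ (by rw [dist_comm, dist_eq_norm]; linarith)
    rw [Real.dist_eq] at h1
    linarith [(abs_lt.1 h1).2]
  · have e1 : ∀ x, ζ x * fderiv ℝ (mol (ρs j) h) x (φ x) = fderiv ℝ (mol (ρs j) h) x (p x) := by
      intro x
      by_cases hx : x ∈ constBall h δ
      · rw [hρ.fderiv_mol_eq_zero hhl hx]; simp
      · rw [hp, indicator_of_mem (by exact hx)]; simp
    simp_rw [e1]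
    refine key.trans ?_
    gcongr
end

/-! ### Partition of unity and integration by parts -/

section
variable {n : ℕ} {f : En n → ℝ} {f' : En n → En n}

/-- A smooth partition of unity on `U`, finite near every compact subset of `U`. -/
lemma exists_cutoffs {U : Set (En n)} (hU : IsOpen U) (hUb : Bornology.IsBounded U) :
    ∃ ζ : ℕ → En n → ℝ, (∀ k, ContDiff ℝ ∞ (ζ k)) ∧ (∀ k, HasCompactSupport (ζ k)) ∧
      (∀ k, tsupport (ζ k) ⊆ U) ∧ (∀ k x, 0 ≤ ζ k x) ∧
      (∀ N x, ∑ k ∈ Finset.range N, ζ k x ≤ 1) ∧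
      ∀ K : Set (En n), IsCompact K → K ⊆ U → ∃ N : ℕ, ∃ V : Set (En n), IsOpen V ∧ K ⊆ V ∧
        ∀ x ∈ V, (∀ k, N ≤ k → ζ k x = 0) ∧ ∑ k ∈ Finset.range N, ζ k x = 1 := by
  let r : ℕ → ℝ≥0∞ := fun k => ENNReal.ofReal (1 / ((k : ℝ) + 1))
  have hr0 : ∀ k, 0 < r k := fun k => ENNReal.ofReal_pos.2 (by positivity)
  have hr : ∀ k l, k < l → r l < r k := fun k l hkl =>
    (ENNReal.ofReal_lt_ofReal_iff (by positivity)).2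
      (one_div_lt_one_div_of_lt (by positivity) (by exact_mod_cast Nat.succ_lt_succ hkl))
  let O : ℕ → Set (En n) := fun k => {x | r k < Metric.infEDist x Uᶜ}
  let S : ℕ → Set (En n) := fun k => {x | r k ≤ Metric.infEDist x Uᶜ}
  have hO : ∀ k, IsOpen (O k) := fun k => isOpen_lt continuous_const Metric.continuous_infEDist
  have hS : ∀ k, IsClosed (S k) := fun k => isClosed_le continuous_const Metric.continuous_infEDist
  have hOS : ∀ k, O k ⊆ S k := fun k x hx => le_of_lt (show r k < Metric.infEDist x Uᶜ from hx)
  have hSO : ∀ k l, k < l → S k ⊆ O l := fun k l hkl x hx =>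
    lt_of_lt_of_le (hr k l hkl) (show r k ≤ Metric.infEDist x Uᶜ from hx)
  have hOm : Monotone O := fun k l hkl => by
    rcases hkl.lt_or_eq with h | rfl
    · exact (hOS k).trans (hSO k l h)
    · exact le_rfl
  have hSU : ∀ k, S k ⊆ U := fun k x hx => by
    by_contra hc
    have h0 : Metric.infEDist x Uᶜ = 0 := Metric.infEDist_zero_of_mem hc
    have h1 : r k ≤ Metric.infEDist x Uᶜ := hx
    rw [h0] at h1
    exact absurd h1 (not_le.2 (hr0 k))
  have hSc : ∀ k, IsCompact (S k) := fun k =>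
    Metric.isCompact_of_isClosed_isBounded (hS k) (hUb.subset (hSU k))
  have hUO : U ⊆ ⋃ k, O k := fun x hx => by
    have h1 : 0 < Metric.infEDist x Uᶜ := by
      rw [pos_iff_ne_zero, Ne, ← Metric.mem_iff_infEDist_zero_of_closed hU.isClosed_compl]
      simpa using hx
    have h2 : Tendsto r atTop (𝓝 0) := by
      have := ENNReal.tendsto_ofReal (tendsto_one_div_add_atTop_nhds_zero_nat (𝕜 := ℝ))
      rwa [ENNReal.ofReal_zero] at this
    obtain ⟨k, hk⟩ := (h2.eventually (gt_mem_nhds h1)).exists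
    exact mem_iUnion.2 ⟨k, hk⟩
  have hχ : ∀ k, ∃ χ : En n → ℝ, ContDiff ℝ ∞ χ ∧ (∀ x ∉ O (k + 1), χ x = 0) ∧
      (∀ x ∈ S k, χ x = 1) ∧ ∀ x, 0 ≤ χ x ∧ χ x ≤ 1 := by
    intro k
    obtain ⟨χ, h0, h1, h2⟩ := exists_contMDiffMap_zero_one_of_isClosed
      (n := (⊤ : ℕ∞)) (modelWithCornersSelf ℝ (En n)) (hO (k + 1)).isClosed_compl (hS k)
      (disjoint_compl_left_iff_subset.2 (hSO k (k + 1) (Nat.lt_succ_self k)))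
    exact ⟨χ, contMDiff_iff_contDiff.1 χ.contMDiff, fun x hx => h0 hx, fun x hx => h1 hx, h2⟩
  choose χ hχs hχ0 hχ1 hχb using hχ
  have hχsupp : ∀ k, tsupport (χ k) ⊆ S (k + 1) := fun k =>
    closure_minimal (fun x hx => hOS _ (by by_contra hc; exact hx (hχ0 k x hc))) (hS _)
  have hχm : ∀ k x, χ k x ≤ χ (k + 1) x := fun k x => by
    by_cases hx : x ∈ O (k + 1)
    · rw [hχ1 (k + 1) x (hOS _ hx)]; exact (hχb k x).2
    · rw [hχ0 k x hx]; exact (hχb _ _).1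
  -- the cutoffs are the increments of the increasing sequence `0, χ 0, χ 1, …`
  let ξ : ℕ → En n → ℝ := fun k => Nat.casesOn k (fun _ => 0) χ
  have hξs : ∀ k, ContDiff ℝ ∞ (ξ k) := fun k => by
    cases k
    · exact contDiff_const
    · exact hχs _
  have hξsupp : ∀ k, tsupport (ξ k) ⊆ S k := fun k => by
    cases k
    · have : tsupport (fun _ : En n => (0 : ℝ)) = ∅ := by simp [tsupport]
      exact this.subset.trans (empty_subset _)
    · exact hχsupp _
  have hζsupp : ∀ k, tsupport (fun x => ξ (k + 1) x - ξ k x) ⊆ S (k + 1) := fun k => by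
    refine closure_minimal (fun x hx => ?_) (hS _)
    by_contra hc
    have h1 : ξ (k + 1) x = 0 :=
      image_eq_zero_of_notMem_tsupport fun h => hc (hξsupp (k + 1) h)
    have h2 : ξ k x = 0 := image_eq_zero_of_notMem_tsupport fun h =>
      hc (hOS _ (hSO k (k + 1) (Nat.lt_succ_self k) (hξsupp k h)))
    exact hx (by simp only [h1, h2, sub_self])
  have hsum : ∀ N x, ∑ k ∈ Finset.range N, (ξ (k + 1) x - ξ k x) = ξ N x := fun N x => by
    rw [Finset.sum_range_sub (fun k => ξ k x)]
    simp [ξ]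
  refine ⟨fun k x => ξ (k + 1) x - ξ k x, fun k => (hξs (k + 1)).sub (hξs k), fun k => ?_, fun k => ?_,
    fun k x => ?_, fun N x => ?_, fun K hK hKU => ?_⟩
  · exact (hSc (k + 1)).of_isClosed_subset (isClosed_tsupport _) (hζsupp k)
  · exact (hζsupp k).trans (hSU _)
  · cases k with
    | zero => simpa [ξ] using (hχb 0 x).1
    | succ k => exact sub_nonneg.2 (hχm k x)
  · rw [hsum]
    cases N
    · simp [ξ]
    · exact (hχb _ _).2
  · obtain ⟨N, hN⟩ := hK.elim_directed_cover O hO (hKU.trans hUO) hOm.directed_le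
    refine ⟨N + 1, O N, hO N, hN, fun x hx => ⟨fun k hk => ?_, ?_⟩⟩
    · obtain ⟨l, rfl⟩ := Nat.exists_eq_add_of_le' hk
      have h1 : ∀ j, N ≤ j → χ j x = 1 := fun j hj => hχ1 j x (hOS _ (hOm hj hx))
      show χ (l + (N + 1)) x - χ (l + N) x = 0
      rw [h1 _ (by omega), h1 _ (by omega), sub_self]
    · rw [hsum]
      exact hχ1 N x (hOS _ hx)

lemma continuous_dvg {φ : En n → En n} (hφ : ContDiff ℝ 1 φ) : Continuous (dvg φ) := by
  have h := hφ.continuous_fderiv (by simp)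
  unfold dvg
  fun_prop

lemma dvg_eq_zero {φ : En n → En n} {x : En n} (hx : x ∉ tsupport φ) : dvg φ x = 0 := by
  have : fderiv ℝ φ x = 0 := by
    by_contra hc
    exact hx (support_fderiv_subset ℝ hc)
  simp [dvg, this]

lemma hasCompactSupport_dvg {φ : En n → En n} (hφ : HasCompactSupport φ) :
    HasCompactSupport (dvg φ) :=
  HasCompactSupport.intro hφ fun _ hx => dvg_eq_zero hx

lemma integrable_mul_dvg (hf : Integrable f) {φ : En n → En n} (hφ : ContDiff ℝ 1 φ)
    (hφc : HasCompactSupport φ) : Integrable fun x => f x * dvg φ x := by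
  obtain ⟨B, hB⟩ := (hasCompactSupport_dvg hφc).exists_bound_of_continuous (continuous_dvg hφ)
  exact hf.mul_bdd (continuous_dvg hφ).aestronglyMeasurable (Eventually.of_forall hB)

lemma integrable_inner_grad (hw : HasWeakGrad f f') {φ : En n → En n} (hφ : Continuous φ)
    (hφc : HasCompactSupport φ) : Integrable fun x => ⟪φ x, f' x⟫ := by
  obtain ⟨B, hB⟩ := hφc.exists_bound_of_continuous hφ
  have h1 : IntegrableOn (fun x => ⟪φ x, f' x⟫) (tsupport φ) := by
    refine ((hw.2.1.integrableOn_isCompact hφc).norm.const_mul B).mono'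
      (hφ.aestronglyMeasurable.inner
        (hw.2.1.integrableOn_isCompact hφc).aestronglyMeasurable) (Eventually.of_forall fun x => ?_)
    exact (norm_inner_le_norm _ _).trans (by gcongr; exact hB x)
  exact h1.integrable_of_forall_notMem_eq_zero fun x hx => by
    simp [image_eq_zero_of_notMem_tsupport hx]

lemma integrable_test (hf : Integrable f) (hw : HasWeakGrad f f') {h : En n → ℝ} {M : ℝ}
    (hhm : AEStronglyMeasurable h volume) (hM : ∀ x, |h x| ≤ M)
    {φ : En n → En n} (hφ : ContDiff ℝ 1 φ) (hφc : HasCompactSupport φ) :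
    Integrable fun x => h x * (f x * dvg φ x + ⟪φ x, f' x⟫) :=
  ((integrable_mul_dvg hf hφ hφc).add (integrable_inner_grad hw hφ.continuous hφc)).bdd_mul hhm
    (Eventually.of_forall hM)

/-- Integration by parts against a `C¹` function. -/
lemma integral_test_of_contDiff (hf : Integrable f) (hw : HasWeakGrad f f') {b : En n → ℝ}
    (hb : ContDiff ℝ 1 b) {φ : En n → En n} (hφ : ContDiff ℝ 1 φ) (hφc : HasCompactSupport φ) :
    ∫ x, b x * (f x * dvg φ x + ⟪φ x, f' x⟫) = -∫ x, f x * fderiv ℝ b x (φ x) := by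
  have hs : ContDiff ℝ 1 fun x => b x • φ x := hb.smul hφ
  have hsc : HasCompactSupport fun x => b x • φ x :=
    HasCompactSupport.intro hφc fun x hx => by simp [image_eq_zero_of_notMem_tsupport hx]
  have hd : Continuous fun x => fderiv ℝ b x (φ x) :=
    (hb.continuous_fderiv (by simp)).clm_apply hφ.continuous
  have hdc : HasCompactSupport fun x => fderiv ℝ b x (φ x) :=
    HasCompactSupport.intro hφc fun x hx => by simp [image_eq_zero_of_notMem_tsupport hx]
  obtain ⟨B, hB⟩ := hdc.exists_bound_of_continuous hd
  have i1 := integrable_mul_dvg hf hs hsc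
  have i2 := integrable_inner_grad hw hs.continuous hsc
  have i3 : Integrable fun x => f x * fderiv ℝ b x (φ x) :=
    hf.mul_bdd hd.aestronglyMeasurable (Eventually.of_forall hB)
  have e : ∀ x, b x * (f x * dvg φ x + ⟪φ x, f' x⟫) =
      (f x * dvg (fun x => b x • φ x) x + ⟪b x • φ x, f' x⟫) - f x * fderiv ℝ b x (φ x) := by
    intro x
    rw [dvg_smul (hb.differentiable (by simp)).differentiableAt
      (hφ.differentiable (by simp)).differentiableAt, real_inner_smul_left]
    ring
  simp_rw [e]
  have i12 : Integrable fun x => f x * dvg (fun x => b x • φ x) x + ⟪b x • φ x, f' x⟫ := i1.add i2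
  rw [integral_sub i12 i3, integral_add i1 i2, hw.2.2 _ hs hsc]
  ring
end

/-! ### Gluing -/

section
variable {n : ℕ} {f : En n → ℝ} {f' : En n → En n}

lemma sum_halves_le {ε : ℝ} (hε : 0 < ε) (N : ℕ) :
    ∑ k ∈ Finset.range N, ε / 2 / 2 ^ k ≤ ε := by
  have h := (summable_geometric_two' ε).sum_le_tsum (Finset.range N) fun k _ => by positivity
  rwa [tsum_geometric_two'] at h

/-- The approximation at accuracy `ε` of a bounded measurable `h`: glue local mollifications with
a partition of unity. -/
lemma global_step (hf0 : ∀ x, 0 ≤ f x) (hf : Integrable f) (hw : HasWeakGrad f f') {C : ℝ}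
    (hC : 0 ≤ C) {ρs : ℕ → En n → ℝ}
    (hρs : ∀ j : ℕ, IsMoll C (1 / ((j : ℝ) + 1)) (ρs j))
    (hae : ∀ h : En n → ℝ, LocallyIntegrable h volume →
      ∀ᵐ x, Tendsto (fun j => mol (ρs j) h x) atTop (𝓝 (h x)))
    {U : Set (En n)} (hU : IsOpen U) (hUb : Bornology.IsBounded U)
    {h : En n → ℝ} {M V : ℝ} (hhm : AEStronglyMeasurable h volume) (hM : ∀ x, |h x| ≤ M)
    (hV : ∀ Ψ, IsTestField U Ψ → ∫ x, h x * (f x * dvg Ψ x + ⟪Ψ x, f' x⟫) ≤ V)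
    {ε : ℝ} (hε : 0 < ε) :
    ∃ G : En n → ℝ, ContDiffOn ℝ ∞ G U ∧ (∀ x, |G x| ≤ M) ∧
      ∫⁻ x in U, ENNReal.ofReal (f x * |G x - h x|) ≤ ENNReal.ofReal ε ∧
      ∀ φ, IsTestField U φ → ∫ x in U, G x * (f x * dvg φ x + ⟪φ x, f' x⟫) ≤
        (1 + ε) * V + (1 + C) * M * ((∫ x in U \ locConst h, ‖f' x‖) + ε) + ε := by
  classical
  have hM0 : 0 ≤ M := (abs_nonneg _).trans (hM 0)
  obtain ⟨ζ, hζ, hζc, hζU, hζ0, hζ1, hfin⟩ := exists_cutoffs hU hUb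
  have hηk : ∀ k : ℕ, 0 < ε / 2 / 2 ^ k := fun k => by positivity
  choose Gk hGs hGM hGL hGφ using fun k =>
    local_step hf0 hf hw hC hρs hae hU hUb hhm hM (hζ k) (hζc k) (hζU k) (hζ0 k) (hηk k)
  set G : En n → ℝ := fun x => ∑' k, ζ k x * Gk k x with hG
  have hζoff : ∀ k x, x ∉ U → ζ k x = 0 := fun k x hx =>
    image_eq_zero_of_notMem_tsupport fun hc => hx (hζU k hc)
  have hGfin : ∀ N x, (∀ k, N ≤ k → ζ k x = 0) → G x = ∑ k ∈ Finset.range N, ζ k x * Gk k x :=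
    fun N x hx => tsum_eq_sum fun k hk => by rw [hx k (by simpa using hk), zero_mul]
  have hpt : ∀ x ∈ U, ∃ N : ℕ, (∀ k, N ≤ k → ζ k x = 0) ∧ ∑ k ∈ Finset.range N, ζ k x = 1 := by
    intro x hx
    obtain ⟨N, V, -, hKV, h1⟩ := hfin {x} isCompact_singleton (singleton_subset_iff.2 hx)
    exact ⟨N, h1 x (hKV rfl)⟩
  have hi2 : ∀ k, Integrable fun x => f x * ((‖fderiv ℝ (ζ k) x‖ + ζ k x) * |Gk k x - h x|) := by
    intro k
    have hc : Continuous (fderiv ℝ (ζ k)) := (hζ k).continuous_fderiv (by simp)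
    obtain ⟨Z, hZ⟩ := (hζc k).exists_bound_of_continuous (hζ k).continuous
    obtain ⟨B, hB⟩ := ((hζc k).fderiv ℝ).exists_bound_of_continuous hc
    refine hf.mul_bdd (c := (B + Z) * (2 * M)) ((hc.norm.add
      (hζ k).continuous).aestronglyMeasurable.mul
      ((hGs k).continuous.aestronglyMeasurable.sub hhm).norm) (Eventually.of_forall fun x => ?_)
    have h1 : |Gk k x - h x| ≤ 2 * M := (abs_sub _ _).trans (by linarith [hGM k x, hM x])
    have hZ0 : 0 ≤ Z := (norm_nonneg _).trans (hZ 0)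
    have hB0 : 0 ≤ B := (norm_nonneg _).trans (hB 0)
    rw [norm_mul, Real.norm_eq_abs |_|, abs_abs]
    refine mul_le_mul ?_ h1 (abs_nonneg _) (by positivity)
    refine (norm_add_le _ _).trans ?_
    rw [norm_norm]
    exact add_le_add (hB x) (hZ x)
  refine ⟨G, ?_, fun x => ?_, ?_, fun φ hφ => ?_⟩
  · intro x hx
    obtain ⟨N, V, hVo, hKV, h1⟩ := hfin {x} isCompact_singleton (singleton_subset_iff.2 hx)
    have h2 : ContDiff ℝ ∞ fun x => ∑ k ∈ Finset.range N, ζ k x * Gk k x :=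
      ContDiff.sum fun k _ => (hζ k).mul (hGs k)
    refine (h2.contDiffAt.congr_of_eventuallyEq ?_).contDiffWithinAt
    filter_upwards [hVo.mem_nhds (hKV rfl)] with y hy
    exact hGfin N y (h1 y hy).1
  · by_cases hx : x ∈ U
    · obtain ⟨N, h1, h2⟩ := hpt x hx
      rw [hGfin N x h1]
      calc |∑ k ∈ Finset.range N, ζ k x * Gk k x| ≤ ∑ k ∈ Finset.range N, |ζ k x * Gk k x| :=
            Finset.abs_sum_le_sum_abs _ _
        _ ≤ ∑ k ∈ Finset.range N, ζ k x * M := by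
            gcongr with k
            rw [abs_mul, abs_of_nonneg (hζ0 k x)]
            exact mul_le_mul_of_nonneg_left (hGM k x) (hζ0 k x)
        _ = M := by rw [← Finset.sum_mul, h2, one_mul]
    · simpa [hG, hζoff _ x hx] using hM0
  · have hi : ∀ k, Integrable fun x => f x * (ζ k x * |Gk k x - h x|) := by
      intro k
      obtain ⟨Z, hZ⟩ := (hζc k).exists_bound_of_continuous (hζ k).continuous
      refine hf.mul_bdd (c := Z * (2 * M)) ((hζ k).continuous.aestronglyMeasurable.mul
        ((hGs k).continuous.aestronglyMeasurable.sub hhm).norm) (Eventually.of_forall fun x => ?_)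
      have h1 : |Gk k x - h x| ≤ 2 * M := (abs_sub _ _).trans (by linarith [hGM k x, hM x])
      have hZ0 : 0 ≤ Z := (norm_nonneg _).trans (hZ 0)
      rw [norm_mul, Real.norm_eq_abs |_|, abs_abs]
      exact mul_le_mul (hZ x) h1 (abs_nonneg _) hZ0
    calc ∫⁻ x in U, ENNReal.ofReal (f x * |G x - h x|)
        ≤ ∫⁻ x in U, ∑' k, ENNReal.ofReal (f x * (ζ k x * |Gk k x - h x|)) := by
          refine setLIntegral_mono' hU.measurableSet fun x hx => ?_
          obtain ⟨N, h1, h2⟩ := hpt x hx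
          refine le_trans ?_ (ENNReal.sum_le_tsum (Finset.range N))
          rw [← ENNReal.ofReal_sum_of_nonneg fun k _ =>
            mul_nonneg (hf0 x) (mul_nonneg (hζ0 k x) (abs_nonneg _)), ← Finset.mul_sum]
          refine ENNReal.ofReal_le_ofReal (mul_le_mul_of_nonneg_left ?_ (hf0 x))
          have e : G x - h x = ∑ k ∈ Finset.range N, ζ k x * (Gk k x - h x) := by
            simp_rw [mul_sub, Finset.sum_sub_distrib]
            rw [← Finset.sum_mul, h2, one_mul, hGfin N x h1]
          rw [e]
          refine (Finset.abs_sum_le_sum_abs _ _).trans (Finset.sum_le_sum fun k _ => ?_)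
          rw [abs_mul, abs_of_nonneg (hζ0 k x)]
      _ ≤ ∫⁻ x, ∑' k, ENNReal.ofReal (f x * (ζ k x * |Gk k x - h x|)) := setLIntegral_le_lintegral _ _
      _ = ∑' k, ∫⁻ x, ENNReal.ofReal (f x * (ζ k x * |Gk k x - h x|)) :=
          lintegral_tsum fun k => (hi k).aestronglyMeasurable.aemeasurable.ennreal_ofReal
      _ ≤ ∑' k : ℕ, ENNReal.ofReal (ε / 2 / 2 ^ k) := by
          refine ENNReal.tsum_le_tsum fun k => ?_
          rw [← ofReal_integral_eq_lintegral_ofReal (hi k) (Eventually.of_forall fun x =>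
            mul_nonneg (hf0 x) (mul_nonneg (hζ0 k x) (abs_nonneg _)))]
          refine ENNReal.ofReal_le_ofReal (le_trans (integral_mono (hi k) (hi2 k) fun x => ?_) (hGL k))
          have := hf0 x
          gcongr
          exact le_add_of_nonneg_left (norm_nonneg _)
      _ = ENNReal.ofReal ε := by
          rw [← ENNReal.ofReal_tsum_of_nonneg (fun k => (hηk k).le) (summable_geometric_two' ε),
            tsum_geometric_two']
  · obtain ⟨hφs, hφc, hφU, hφ1⟩ := hφ
    obtain ⟨N, W, hWo, hKW, hW⟩ := hfin (tsupport φ) hφc hφU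
    set GN : En n → ℝ := fun x => ∑ k ∈ Finset.range N, ζ k x * Gk k x with hGN
    have hGNs : ContDiff ℝ 1 GN := by
      have h1 : ContDiff ℝ ∞ GN := ContDiff.sum fun k _ => (hζ k).mul (hGs k)
      exact h1.of_le (by simp)
    have e1 : ∫ x in U, G x * (f x * dvg φ x + ⟪φ x, f' x⟫) =
        ∫ x, GN x * (f x * dvg φ x + ⟪φ x, f' x⟫) := by
      have hz : ∀ x, x ∉ tsupport φ → f x * dvg φ x + ⟪φ x, f' x⟫ = 0 := fun x hx => by
        simp [dvg_eq_zero hx, image_eq_zero_of_notMem_tsupport hx]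
      rw [setIntegral_eq_integral_of_forall_compl_eq_zero fun x hx => by
        rw [hz x fun hc => hx (hφU hc), mul_zero]]
      refine integral_congr_ae (Eventually.of_forall fun x => ?_)
      by_cases hx : x ∈ tsupport φ
      · simp only [hGN, hGfin N x (hW x (hKW hx)).1]
      · simp only [hz x hx, mul_zero]
    have hd : ∀ k x, fderiv ℝ (fun x => ζ k x * Gk k x) x (φ x) =
        ζ k x * fderiv ℝ (Gk k) x (φ x) + Gk k x * fderiv ℝ (ζ k) x (φ x) := by
      intro k x
      rw [fderiv_fun_mul ((hζ k).differentiable (by simp)).differentiableAt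
        ((hGs k).differentiable (by simp)).differentiableAt]
      simp
    have hsum0 : ∀ x, ∑ k ∈ Finset.range N, fderiv ℝ (ζ k) x (φ x) = 0 := by
      intro x
      by_cases hx : x ∈ tsupport φ
      · have h1 : (fun y => ∑ k ∈ Finset.range N, ζ k y) =ᶠ[𝓝 x] fun _ => 1 := by
          filter_upwards [hWo.mem_nhds (hKW hx)] with y hy using (hW y hy).2
        have h2 := h1.fderiv_eq (𝕜 := ℝ)
        rw [fderiv_fun_sum fun k _ => ((hζ k).differentiable (by simp)).differentiableAt] at h2
        have h3 := congrArg (fun L : En n →L[ℝ] ℝ => L (φ x)) h2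
        simpa using h3
      · simp [image_eq_zero_of_notMem_tsupport hx]
    have hGNd : ∀ x, f x * fderiv ℝ GN x (φ x) = ∑ k ∈ Finset.range N,
        (f x * (ζ k x * fderiv ℝ (Gk k) x (φ x)) +
          f x * ((Gk k x - h x) * fderiv ℝ (ζ k) x (φ x))) := by
      intro x
      have h1 : fderiv ℝ GN x (φ x) = ∑ k ∈ Finset.range N,
          (ζ k x * fderiv ℝ (Gk k) x (φ x) + Gk k x * fderiv ℝ (ζ k) x (φ x)) := by
        rw [hGN, fderiv_fun_sum fun k _ =>
          (((hζ k).mul (hGs k)).differentiable (by simp)).differentiableAt]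
        simp only [FunLike.coe_sum, Finset.sum_apply, hd]
      have h2 : ∑ k ∈ Finset.range N, h x * fderiv ℝ (ζ k) x (φ x) = 0 := by
        rw [← Finset.mul_sum, hsum0, mul_zero]
      rw [h1, ← sub_zero (∑ k ∈ Finset.range N, (_ : ℝ)), ← h2, ← Finset.sum_sub_distrib,
        Finset.mul_sum]
      exact Finset.sum_congr rfl fun k _ => by ring
    have j1 : ∀ k, Integrable fun x => f x * (ζ k x * fderiv ℝ (Gk k) x (φ x)) := by
      intro k
      have hc : Continuous fun x => ζ k x * fderiv ℝ (Gk k) x (φ x) := (hζ k).continuous.mul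
        (((hGs k).continuous_fderiv (by simp)).clm_apply hφs.continuous)
      have hcc : HasCompactSupport fun x => ζ k x * fderiv ℝ (Gk k) x (φ x) :=
        HasCompactSupport.intro hφc fun x hx => by simp [image_eq_zero_of_notMem_tsupport hx]
      obtain ⟨B, hB⟩ := hcc.exists_bound_of_continuous hc
      exact hf.mul_bdd hc.aestronglyMeasurable (Eventually.of_forall hB)
    have hlip : ∀ k x, |(Gk k x - h x) * fderiv ℝ (ζ k) x (φ x)| ≤
        (‖fderiv ℝ (ζ k) x‖ + ζ k x) * |Gk k x - h x| := by
      intro k x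
      rw [abs_mul, mul_comm]
      refine mul_le_mul_of_nonneg_right ?_ (abs_nonneg _)
      refine ((fderiv ℝ (ζ k) x).le_opNorm _).trans ?_
      have := mul_le_of_le_one_right (norm_nonneg (fderiv ℝ (ζ k) x)) (hφ1 x)
      linarith [hζ0 k x]
    have j2 : ∀ k, Integrable fun x => f x * ((Gk k x - h x) * fderiv ℝ (ζ k) x (φ x)) := by
      intro k
      refine (hi2 k).mono' (hf.aestronglyMeasurable.mul
        (((hGs k).continuous.aestronglyMeasurable.sub hhm).mul
          (((hζ k).continuous_fderiv (by simp)).clm_apply hφs.continuous).aestronglyMeasurable))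
        (Eventually.of_forall fun x => ?_)
      rw [norm_mul, Real.norm_of_nonneg (hf0 x)]
      exact mul_le_mul_of_nonneg_left (hlip k x) (hf0 x)
    choose Ψ hΨs hΨc hΨU hΨb hΨ using fun k => hGφ k φ hφs hφ1
    have b2 : ∀ k, -∫ x, f x * ((Gk k x - h x) * fderiv ℝ (ζ k) x (φ x)) ≤ ε / 2 / 2 ^ k := by
      intro k
      rw [← integral_neg]
      refine (integral_mono (j2 k).neg (hi2 k) fun x => ?_).trans (hGL k)
      show -(f x * ((Gk k x - h x) * fderiv ℝ (ζ k) x (φ x))) ≤ _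
      rw [← mul_neg]
      exact mul_le_mul_of_nonneg_left ((neg_le_abs _).trans (hlip k x)) (hf0 x)
    -- the test fields of the pieces add up to a multiple of an admissible one
    set Φ : En n → En n := fun x => ∑ k ∈ Finset.range N, Ψ k x with hΦ
    have hΦs : ContDiff ℝ 1 Φ := ContDiff.sum fun k _ => hΨs k
    have hK : IsCompact (⋃ k ∈ Finset.range N, tsupport (Ψ k)) :=
      (Finset.range N).isCompact_biUnion fun k _ => hΨc k
    have hΦt : tsupport Φ ⊆ ⋃ k ∈ Finset.range N, tsupport (Ψ k) := by
      refine closure_minimal (fun x hx => ?_) hK.isClosed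
      by_contra hc
      refine hx (Finset.sum_eq_zero fun k hk => image_eq_zero_of_notMem_tsupport fun h1 => hc ?_)
      exact mem_biUnion hk h1
    have hΦc : HasCompactSupport Φ := hK.of_isClosed_subset (isClosed_tsupport _) hΦt
    have hΦU : tsupport Φ ⊆ U := hΦt.trans (iUnion₂_subset fun k _ => hΨU k)
    have hΦb : ∀ x, ‖Φ x‖ ≤ 1 + ε := fun x => by
      calc ‖Φ x‖ ≤ ∑ k ∈ Finset.range N, (ζ k x + ε / 2 / 2 ^ k) :=
            norm_sum_le_of_le _ fun k _ => hΨb k x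
        _ ≤ 1 + ε := by
            rw [Finset.sum_add_distrib]
            exact add_le_add (hζ1 N x) (sum_halves_le hε N)
    have hε1 : 0 < 1 + ε := by linarith
    have hΦtest : IsTestField U fun x => (1 + ε)⁻¹ • Φ x := by
      have hsub : tsupport (fun x => (1 + ε)⁻¹ • Φ x) ⊆ tsupport Φ :=
        closure_mono fun x hx hc => hx (by
          show (1 + ε)⁻¹ • Φ x = 0
          rw [hc, smul_zero])
      refine ⟨hΦs.const_smul _, hΦc.isCompact.of_isClosed_subset (isClosed_tsupport _) hsub,
        hsub.trans hΦU, fun x => ?_⟩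
      rw [norm_smul, Real.norm_of_nonneg (by positivity), inv_mul_le_iff₀ hε1, mul_one]
      exact hΦb x
    have b3 : ∫ x, h x * (f x * dvg Φ x + ⟪Φ x, f' x⟫) ≤ (1 + ε) * V := by
      have h1 := hV _ hΦtest
      have e : ∀ x, h x * (f x * dvg (fun x => (1 + ε)⁻¹ • Φ x) x + ⟪(1 + ε)⁻¹ • Φ x, f' x⟫) =
          (1 + ε)⁻¹ * (h x * (f x * dvg Φ x + ⟪Φ x, f' x⟫)) := by
        intro x
        rw [dvg_const_smul _ (hΦs.differentiable (by simp)).differentiableAt, real_inner_smul_left]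
        ring
      simp_rw [e] at h1
      rwa [integral_const_mul, inv_mul_le_iff₀ hε1] at h1
    have b4 : ∑ k ∈ Finset.range N, ∫ x, h x * (f x * dvg (Ψ k) x + ⟪Ψ k x, f' x⟫) =
        ∫ x, h x * (f x * dvg Φ x + ⟪Φ x, f' x⟫) := by
      rw [← integral_finsetSum _ fun k _ => integrable_test hf hw hhm hM (hΨs k) (hΨc k)]
      refine integral_congr_ae (Eventually.of_forall fun x => ?_)
      simp only [hΦ]
      rw [dvg_sum _ fun k _ => ((hΨs k).differentiable (by simp)).differentiableAt, sum_inner,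
        Finset.mul_sum, ← Finset.sum_add_distrib, Finset.mul_sum]
    have hKo : MeasurableSet (U \ locConst h) :=
      hU.measurableSet.diff (isOpen_locConst h).measurableSet
    have hfi : Integrable ((U \ locConst h).indicator fun x => ‖f' x‖) :=
      (integrable_indicator_iff hKo).2
        ((integrableOn_of_isBounded hw hUb).mono_set sdiff_subset).norm
    have hζi : ∀ k x, ζ k x * (locConst h)ᶜ.indicator (fun y => ‖f' y‖) x =
        ζ k x * (U \ locConst h).indicator (fun x => ‖f' x‖) x := by
      intro k x
      by_cases hx : x ∈ U
      · by_cases hx2 : x ∈ locConst h <;> simp [hx, hx2]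
      · simp [hζoff k x hx]
    have b5 : ∑ k ∈ Finset.range N, ∫ x, ζ k x * (locConst h)ᶜ.indicator (fun y => ‖f' y‖) x ≤
        ∫ x in U \ locConst h, ‖f' x‖ := by
      simp_rw [hζi]
      have hki : ∀ k, Integrable fun x => ζ k x * (U \ locConst h).indicator (fun x => ‖f' x‖) x := by
        intro k
        obtain ⟨Z, hZ⟩ := (hζc k).exists_bound_of_continuous (hζ k).continuous
        exact hfi.bdd_mul (hζ k).continuous.aestronglyMeasurable (Eventually.of_forall hZ)
      rw [← integral_finsetSum _ fun k _ => hki k, ← integral_indicator hKo]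
      refine integral_mono (integrable_finsetSum _ fun k _ => hki k) hfi fun x => ?_
      show ∑ k ∈ Finset.range N, ζ k x * (U \ locConst h).indicator (fun x => ‖f' x‖) x ≤ _
      rw [← Finset.sum_mul]
      exact mul_le_of_le_one_left (indicator_nonneg (fun _ _ => norm_nonneg _) _) (hζ1 N x)
    rw [e1, integral_test_of_contDiff hf hw hGNs hφs hφc]
    simp_rw [hGNd]
    have j12 : ∀ k, Integrable fun x => f x * (ζ k x * fderiv ℝ (Gk k) x (φ x)) +
        f x * ((Gk k x - h x) * fderiv ℝ (ζ k) x (φ x)) := fun k => (j1 k).add (j2 k)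
    rw [integral_finsetSum _ fun k _ => j12 k, ← Finset.sum_neg_distrib]
    calc ∑ k ∈ Finset.range N, -∫ x, (f x * (ζ k x * fderiv ℝ (Gk k) x (φ x)) +
          f x * ((Gk k x - h x) * fderiv ℝ (ζ k) x (φ x)))
        ≤ ∑ k ∈ Finset.range N, ((∫ x, h x * (f x * dvg (Ψ k) x + ⟪Ψ k x, f' x⟫)) +
          (1 + C) * M * ((∫ x, ζ k x * (locConst h)ᶜ.indicator (fun y => ‖f' y‖) x) +
            ε / 2 / 2 ^ k) + ε / 2 / 2 ^ k) := by
          refine Finset.sum_le_sum fun k _ => ?_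
          rw [integral_add (j1 k) (j2 k), neg_add]
          exact add_le_add (hΨ k) (b2 k)
      _ = (∫ x, h x * (f x * dvg Φ x + ⟪Φ x, f' x⟫)) +
          (1 + C) * M * ((∑ k ∈ Finset.range N,
            ∫ x, ζ k x * (locConst h)ᶜ.indicator (fun y => ‖f' y‖) x) +
            ∑ k ∈ Finset.range N, ε / 2 / 2 ^ k) + ∑ k ∈ Finset.range N, ε / 2 / 2 ^ k := by
          rw [Finset.sum_add_distrib, Finset.sum_add_distrib, b4, ← Finset.mul_sum,
            Finset.sum_add_distrib]
      _ ≤ _ := by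
          gcongr
          · exact sum_halves_le hε N
          · exact sum_halves_le hε N
end

/-! ### Reduction to measurable functions -/

section
variable {n : ℕ} {f : En n → ℝ} {f' : En n → En n}

lemma bvVar_const (hf : Integrable f) (hw : HasWeakGrad f f') (U : Set (En n)) (c : ℝ) :
    bvVar f f' U (fun _ => c) = 0 := by
  refine le_antisymm (iSup₂_le fun φ hφ => ?_) zero_le
  obtain ⟨hφs, hφc, hφU, -⟩ := hφ
  rw [setIntegral_eq_integral_of_forall_compl_eq_zero, integral_test_of_contDiff hf hw
    contDiff_const hφs hφc]
  · simp
  · intro x hx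
    have hx' : x ∉ tsupport φ := fun hc => hx (hφU hc)
    simp [dvg_eq_zero hx', image_eq_zero_of_notMem_tsupport hx']

lemma ae_le_toReal_eLpNorm {U : Set (En n)} {g : En n → ℝ}
    (hg : eLpNorm g ⊤ (volume.restrict U) < ⊤) :
    ∀ᵐ x ∂(volume.restrict U), |g x| ≤ (eLpNorm g ⊤ (volume.restrict U)).toReal := by
  rw [eLpNorm_exponent_top] at hg ⊢
  filter_upwards [ae_le_eLpNormEssSup (f := g) (μ := volume.restrict U)] with x hx
  have h1 := ENNReal.toReal_mono hg.ne hx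
  simpa using h1

lemma restrict_muM_ac (U : Set (En n)) : (muM f).restrict U ≪ volume.restrict U :=
  (withDensity_absolutelyContinuous _ _).restrict U

/-- If `g` is not measurable for the weighted measure, then some constant `c`, bounded by the
essential supremum of `g`, has `|c - g|` non-measurable, so that its Bochner integral is the
default value `0`. -/
lemma exists_const_of_not_measurable {U : Set (En n)} {g : En n → ℝ}
    (hg : eLpNorm g ⊤ (volume.restrict U) < ⊤)
    (hgm : ¬ AEStronglyMeasurable g ((muM f).restrict U)) :
    ∃ c : ℝ, |c| ≤ (eLpNorm g ⊤ (volume.restrict U)).toReal ∧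
      ∫ x in U, |c - g x| ∂(muM f) = 0 := by
  set M := (eLpNorm g ⊤ (volume.restrict U)).toReal with hM
  have hM0 : 0 ≤ M := ENNReal.toReal_nonneg
  have hMpos : M ≠ 0 := by
    intro h0
    refine hgm ?_
    have h1 : g =ᵐ[(muM f).restrict U] fun _ => 0 := by
      refine (restrict_muM_ac U).ae_le ?_
      filter_upwards [ae_le_toReal_eLpNorm hg] with x hx
      rw [← hM, h0] at hx
      exact abs_eq_zero.1 (le_antisymm hx (abs_nonneg _))
    exact aestronglyMeasurable_const.congr h1.symm
  by_cases h0 : AEStronglyMeasurable (fun x => |0 - g x|) ((muM f).restrict U)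
  · by_cases h1 : AEStronglyMeasurable (fun x => |M - g x|) ((muM f).restrict U)
    · exfalso
      refine hgm ?_
      -- `2 M g = |g|² - |M - g|² + M²` recovers `g` from the two moduli
      have h2 := (((h0.mul h0).sub (h1.mul h1)).add
        (aestronglyMeasurable_const (b := M * M))).const_mul (1 / (2 * M))
      refine h2.congr (Eventually.of_forall fun x => ?_)
      simp only [Pi.add_apply, Pi.sub_apply, Pi.mul_apply, abs_mul_abs_self]
      field_simp
      ring
    · exact ⟨M, by rw [abs_of_nonneg hM0], integral_undef fun hi => h1 hi.aestronglyMeasurable⟩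
  · exact ⟨0, by simpa using hM0, integral_undef fun hi => h0 hi.aestronglyMeasurable⟩

/-- A bounded `g` which is measurable for the weighted measure can be replaced by a Lebesgue
measurable function with the same bound, equal to `g` almost everywhere on `U` where `f ≠ 0`, and
locally constant wherever `g` is. -/
lemma exists_measurable_modification (hf : Integrable f) (hf0 : ∀ x, 0 ≤ f x) {U : Set (En n)}
    (hU : IsOpen U) {g : En n → ℝ} (hg : eLpNorm g ⊤ (volume.restrict U) < ⊤)
    (hgm : AEStronglyMeasurable g ((muM f).restrict U)) :
    ∃ h : En n → ℝ, AEStronglyMeasurable h volume ∧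
      (∀ x, |h x| ≤ (eLpNorm g ⊤ (volume.restrict U)).toReal) ∧
      (∀ᵐ x, x ∈ U → f x ≠ 0 → h x = g x) ∧ U ∩ locConst g ⊆ locConst h := by
  classical
  set M := (eLpNorm g ⊤ (volume.restrict U)).toReal with hM
  have hM0 : 0 ≤ M := ENNReal.toReal_nonneg
  let cl : ℝ → ℝ := fun t => max (-M) (min M t)
  have hcl : Continuous cl := continuous_const.max (continuous_const.min continuous_id)
  have hclM : ∀ t, |cl t| ≤ M := fun t =>
    abs_le.2 ⟨le_max_left _ _, max_le (by linarith) (min_le_left _ _)⟩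
  have hcleq : ∀ t, |t| ≤ M → cl t = t := fun t ht => by
    have := abs_le.1 ht
    simp only [cl]
    rw [min_eq_right this.2, max_eq_right this.1]
  set W : Set (En n) := U ∩ locConst g with hW
  have hWo : IsOpen W := hU.inter (isOpen_locConst g)
  have hgc : ContinuousOn g W := by
    rintro x ⟨-, O, ⟨hO, c, hc⟩, hxO⟩
    refine ContinuousAt.continuousWithinAt ?_
    refine (continuousAt_const (y := c)).congr ?_
    filter_upwards [hO.mem_nhds hxO] with y hy using (hc y hy).symm
  obtain ⟨g0, hg0m, hg0⟩ := hgm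
  have hae0 : ∀ᵐ x, x ∈ U → f x ≠ 0 → g x = g0 x := by
    have e : (muM f).restrict U =
        (volume.restrict U).withDensity fun x => ENNReal.ofReal (f x) :=
      restrict_withDensity hU.measurableSet _
    have h1 := hg0
    rw [e] at h1
    have h2 := (ae_withDensity_iff' (hf.aestronglyMeasurable.aemeasurable.ennreal_ofReal.mono_measure
      Measure.restrict_le_self)).1 h1
    rw [ae_restrict_iff' hU.measurableSet] at h2
    filter_upwards [h2] with x hx hxU hfx
    exact hx hxU (by simpa using lt_of_le_of_ne (hf0 x) (Ne.symm hfx))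
  refine ⟨W.piecewise (fun x => cl (g x)) (fun x => cl (g0 x)), ?_, fun x => ?_, ?_, ?_⟩
  · refine AEStronglyMeasurable.piecewise hWo.measurableSet
      ((hcl.comp_continuousOn hgc).aestronglyMeasurable hWo.measurableSet) ?_
    exact (hcl.comp_stronglyMeasurable hg0m).aestronglyMeasurable
  · by_cases hx : x ∈ W <;> simp [hx, hclM]
  · have h2 := ae_le_toReal_eLpNorm hg
    rw [ae_restrict_iff' hU.measurableSet] at h2
    filter_upwards [hae0, h2] with x h3 h4 hxU hfx
    have h5 := hcleq _ (h4 hxU)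
    by_cases hx : x ∈ W
    · simp [hx, h5]
    · simp [hx, ← h3 hxU hfx, h5]
  · rintro x ⟨hxU, O, ⟨hO, c, hc⟩, hxO⟩
    refine ⟨O ∩ U, ⟨hO.inter hU, cl c, fun y hy => ?_⟩, hxO, hxU⟩
    have hy' : y ∈ W := ⟨hy.2, O, ⟨hO, c, hc⟩, hy.1⟩
    simp [hy', hc y hy.1]

end

end

/-- **Improved smooth approximation.** For bounded open `U` and `g ∈ BV_μ(U) ∩ L^∞(U)`,
letting `𝒦` be the union of all open sets on which `g` is constant, the smooth
approximations can be chosen so that the error term in the variation bound only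
involves `∫_{U ∖ 𝒦} |∇f|`. -/
theorem smooth_approximation_improved (n : ℕ) :
    ∃ C : ℝ, 0 ≤ C ∧
      ∀ (f : En n → ℝ) (f' : En n → En n), MemW f f' →
      ∀ U : Set (En n), IsOpen U → Bornology.IsBounded U →
      ∀ g : En n → ℝ, bvVar f f' U g < ⊤ → eLpNorm g ⊤ (volume.restrict U) < ⊤ →
      ∃ G : ℝ → En n → ℝ,
        (∀ ε : ℝ, 0 < ε → ContDiffOn ℝ (⊤ : ℕ∞) (G ε) U ∧ bvVar f f' U (G ε) < ⊤ ∧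
          eLpNorm (G ε) ⊤ (volume.restrict U) ≤
            eLpNorm g ⊤ (volume.restrict U) * ENNReal.ofReal (1 + 2 * ε)) ∧
        Tendsto (fun ε => ∫ x in U, |G ε x - g x| ∂(muM f)) (𝓝[>] (0:ℝ)) (𝓝 0) ∧
        limsup (fun ε => bvVar f f' U (G ε)) (𝓝[>] (0:ℝ)) ≤
          bvVar f f' U g +
            ENNReal.ofReal C * eLpNorm g ⊤ (volume.restrict U) *
              ∫⁻ x in U \ ⋃₀ {O : Set (En n) | IsOpen O ∧ ∃ c : ℝ, ∀ x ∈ O, g x = c},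
                ENNReal.ofReal ‖f' x‖ := by
  obtain ⟨C, hC, ρs, hρs, hae⟩ := exists_moll n
  refine ⟨1 + C, by linarith, fun f f' ⟨hf0, hf, hw⟩ U hU hUb g hgV hgM => ?_⟩
  change ∃ G : ℝ → En n → ℝ, _ ∧ _ ∧ _ ≤ bvVar f f' U g +
    ENNReal.ofReal (1 + C) * eLpNorm g ⊤ (volume.restrict U) *
      ∫⁻ x in U \ locConst g, ENNReal.ofReal ‖f' x‖
  set M := (eLpNorm g ⊤ (volume.restrict U)).toReal with hM
  have hM0 : 0 ≤ M := ENNReal.toReal_nonneg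
  have hMe : eLpNorm g ⊤ (volume.restrict U) = ENNReal.ofReal M := (ENNReal.ofReal_toReal hgM.ne).symm
  have hbound : ∀ (F : En n → ℝ) (ε : ℝ), 0 < ε → (∀ x, |F x| ≤ M) →
      eLpNorm F ⊤ (volume.restrict U) ≤
        eLpNorm g ⊤ (volume.restrict U) * ENNReal.ofReal (1 + 2 * ε) := by
    intro F ε hε hF
    rw [hMe, ← ENNReal.ofReal_mul hM0, eLpNorm_exponent_top]
    refine (eLpNormEssSup_le_of_ae_bound (Eventually.of_forall hF)).trans
      (ENNReal.ofReal_le_ofReal ?_)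
    nlinarith
  by_cases hgm : AEStronglyMeasurable g ((muM f).restrict U)
  swap
  · obtain ⟨c, hc, hc0⟩ := exists_const_of_not_measurable hgM hgm
    refine ⟨fun _ _ => c, fun ε hε => ⟨contDiffOn_const, ?_, hbound _ ε hε fun _ => hc⟩, ?_, ?_⟩
    · rw [bvVar_const hf hw]; exact ENNReal.zero_lt_top
    · simp only [hc0]; exact tendsto_const_nhds
    · simp only [bvVar_const hf hw]
      rw [limsup_const]
      exact zero_le
  obtain ⟨h, hhm, hhM, hhg, hhK⟩ := exists_measurable_modification hf hf0 hU hgM hgm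
  have hgrad := grad_eq_zero_of_eq_zero hf hf0 hw
  set V := (bvVar f f' U g).toReal with hVdef
  have hV0 : 0 ≤ V := ENNReal.toReal_nonneg
  have hVe : bvVar f f' U g = ENNReal.ofReal V := (ENNReal.ofReal_toReal hgV.ne).symm
  have hV : ∀ Ψ, IsTestField U Ψ → ∫ x, h x * (f x * dvg Ψ x + ⟪Ψ x, f' x⟫) ≤ V := by
    intro Ψ hΨ
    have e : ∫ x, h x * (f x * dvg Ψ x + ⟪Ψ x, f' x⟫) =
        ∫ x in U, g x * (f x * dvg Ψ x + ⟪Ψ x, f' x⟫) := by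
      have hz : ∀ x, x ∉ U → f x * dvg Ψ x + ⟪Ψ x, f' x⟫ = 0 := fun x hx => by
        have hx' : x ∉ tsupport Ψ := fun hc => hx (hΨ.2.2.1 hc)
        simp [dvg_eq_zero hx', image_eq_zero_of_notMem_tsupport hx']
      rw [setIntegral_eq_integral_of_forall_compl_eq_zero fun x hx => by rw [hz x hx, mul_zero]]
      refine integral_congr_ae ?_
      filter_upwards [hhg, hgrad] with x h1 h2
      by_cases hxU : x ∈ U
      · by_cases hfx : f x = 0
        · simp [hfx, h2 hfx]
        · rw [h1 hxU hfx]
      · rw [hz x hxU, mul_zero, mul_zero]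
    rw [e, ← ENNReal.ofReal_le_ofReal_iff hV0, ← hVe]
    exact le_iSup₂ (f := fun φ (_ : IsTestField U φ) =>
      ENNReal.ofReal (∫ x in U, g x * (f x * dvg φ x + ⟪φ x, f' x⟫))) Ψ hΨ
  have hstep := fun (ε : ℝ) (hε : 0 < ε) =>
    global_step hf0 hf hw hC hρs hae hU hUb hhm hhM hV hε
  choose! G hGs hGM hGL hGV using hstep
  set I := ∫ x in U \ locConst h, ‖f' x‖ with hI
  have hI0 : 0 ≤ I := integral_nonneg fun _ => norm_nonneg _
  have hIe : ENNReal.ofReal I ≤ ∫⁻ x in U \ locConst g, ENNReal.ofReal ‖f' x‖ := by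
    rw [hI, ofReal_integral_eq_lintegral_ofReal
      ((integrableOn_of_isBounded hw hUb).mono_set sdiff_subset).norm
      (Eventually.of_forall fun _ => norm_nonneg _)]
    exact lintegral_mono_set fun x hx => ⟨hx.1, fun hc => hx.2 (hhK ⟨hx.1, hc⟩)⟩
  have hvar : ∀ ε : ℝ, 0 < ε → bvVar f f' U (G ε) ≤
      ENNReal.ofReal ((1 + ε) * V + (1 + C) * M * (I + ε) + ε) := fun ε hε =>
    iSup₂_le fun φ hφ => ENNReal.ofReal_le_ofReal (hGV ε hε φ hφ)
  refine ⟨G, fun ε hε => ⟨hGs ε hε, (hvar ε hε).trans_lt ENNReal.ofReal_lt_top,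
    hbound _ ε hε (hGM ε hε)⟩, ?_, ?_⟩
  · have hle : ∀ ε : ℝ, 0 < ε → ∫ x in U, |G ε x - g x| ∂(muM f) ≤ ε := by
      intro ε hε
      have hfm : AEMeasurable (fun x => ENNReal.ofReal (f x)) (volume.restrict U) :=
        hf.aestronglyMeasurable.aemeasurable.ennreal_ofReal.mono_measure Measure.restrict_le_self
      have e : ∫⁻ x in U, ENNReal.ofReal ‖|G ε x - g x|‖ ∂(muM f) ≤ ENNReal.ofReal ε := by
        rw [muM, restrict_withDensity hU.measurableSet,
          lintegral_withDensity_eq_lintegral_mul_non_measurable₀ _ hfm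
            (Eventually.of_forall fun _ => ENNReal.ofReal_lt_top)]
        refine le_trans (le_of_eq ?_) (hGL ε hε)
        refine lintegral_congr_ae ?_
        rw [EventuallyEq, ae_restrict_iff' hU.measurableSet]
        filter_upwards [hhg] with x hx hxU
        rw [Pi.mul_apply, ← ENNReal.ofReal_mul (hf0 x), Real.norm_eq_abs, abs_abs]
        by_cases hfx : f x = 0
        · simp [hfx]
        · rw [hx hxU hfx]
      refine (Real.le_norm_self _).trans ((norm_integral_le_lintegral_norm _).trans ?_)
      exact ENNReal.toReal_le_of_le_ofReal hε.le e
    refine squeeze_zero' (Eventually.of_forall fun ε => integral_nonneg fun _ => abs_nonneg _)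
      (g := fun ε => ε) ?_ (tendsto_id.mono_left nhdsWithin_le_nhds)
    filter_upwards [self_mem_nhdsWithin] with ε hε using hle ε hε
  · have hlim : Tendsto (fun ε : ℝ => ENNReal.ofReal ((1 + ε) * V + (1 + C) * M * (I + ε) + ε))
        (𝓝[>] 0) (𝓝 (ENNReal.ofReal (V + (1 + C) * M * I))) := by
      refine ENNReal.tendsto_ofReal (Tendsto.mono_left ?_ nhdsWithin_le_nhds)
      have hc : Continuous fun ε : ℝ => (1 + ε) * V + (1 + C) * M * (I + ε) + ε := by fun_prop
      simpa using hc.tendsto 0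
    calc limsup (fun ε => bvVar f f' U (G ε)) (𝓝[>] (0:ℝ))
        ≤ limsup (fun ε : ℝ => ENNReal.ofReal ((1 + ε) * V + (1 + C) * M * (I + ε) + ε))
            (𝓝[>] (0:ℝ)) := by
          refine limsup_le_limsup ?_
          filter_upwards [self_mem_nhdsWithin] with ε hε using hvar ε hε
      _ = ENNReal.ofReal (V + (1 + C) * M * I) := hlim.limsup_eq
      _ = bvVar f f' U g + ENNReal.ofReal (1 + C) * eLpNorm g ⊤ (volume.restrict U) *
            ENNReal.ofReal I := by
          rw [hMe, hVe, ENNReal.ofReal_add hV0 (by positivity), ENNReal.ofReal_mul (by positivity),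
            ENNReal.ofReal_mul (by positivity)]
      _ ≤ _ := by gcongr

end
end

section
/- Let μ = f·Lⁿ ∈ 𝒲(ℝⁿ). Then generalized Ehrhard symmetrization with respect to μ preserves measurability: for every Lebesgue-measurable set E ⊆ ℝⁿ and every direction v ∈ S^{n−1}, the set S_v(E) is Lebesgue-measurable. -/
/-!
Membership of a point in the symmetrized half-line is a countable family of inequalities between
fiber measures (`mem_ehrhard1D_iff`). If the density and the set are Borel, these fiber measures
are Borel functions of the base point by Tonelli, so the symmetrized set is Borel
(`measurableSet_ehrhardSymm`). In general, replace the density and the set by Borel versions that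
agree with them almost everywhere. By Fubini (`ae_ae_line`) the replacements agree almost
everywhere on almost every line in direction `v`; the symmetrized fiber is then unchanged on
almost every line, so the symmetrized set changes only by a null set.
-/

open MeasureTheory Set Filter
open scoped ENNReal RealInnerProductSpace Topology

noncomputable section

/-- A point `t` lies in the symmetrized half-line iff every half-line starting strictly to the
right of `t` has measure at most `ν A`; by monotonicity the starting points `t + 1/(k+1)`
suffice, which turns membership into countably many conditions. -/
theorem mem_ehrhard1D_iff (ν : Measure ℝ) (A : Set ℝ) (t : ℝ) :
    t ∈ ehrhard1D ν 1 A ↔ ∀ k : ℕ, ν {y | t + 1 / ((k : ℝ) + 1) ≤ y} ≤ ν A := by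
  simp only [ehrhard1D, one_mul, mem_ofPred_eq]
  constructor
  · intro h k
    by_contra hk
    have hpos : (0 : ℝ) < 1 / ((k : ℝ) + 1) := Nat.one_div_pos_of_nat
    have := h (t + 1 / ((k : ℝ) + 1)) (fun c hc => by
      by_contra hlt
      refine hk (le_trans (measure_mono fun y hy => ?_) hc)
      exact (not_le.mp hlt).le.trans hy)
    linarith
  · intro h b hb
    by_contra hlt
    obtain ⟨k, hk⟩ := exists_nat_one_div_lt (sub_pos.mpr (not_le.mp hlt))
    have := hb _ (h k)
    linarith

/-- Almost every line in direction `v` meets a null set in a one-dimensional null set. The lines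
are parametrized (redundantly) by all `z ∈ ℝⁿ`, so that this follows from Fubini on `ℝⁿ × ℝ` and
translation invariance alone. -/
theorem ae_ae_line {n : ℕ} (v : En n) {p : En n → Prop} (hp : ∀ᵐ x, p x) :
    ∀ᵐ z : En n, ∀ᵐ t : ℝ, p ((z - ⟪z, v⟫ • v) + t • v) := by
  obtain ⟨s, hsp, hs, hs0⟩ := exists_measurable_superset_of_null (ae_iff.mp hp)
  have hmeas : MeasurableSet {q : En n × ℝ | q.1 + q.2 • v ∈ sᶜ} :=
    (Continuous.measurable (by fun_prop : Continuous fun q : En n × ℝ => q.1 + q.2 • v)) hs.compl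
  have hs' : ∀ᵐ x : En n, x ∈ sᶜ := by simpa [ae_iff] using hs0
  -- for each fixed parameter, the translated null set is null
  have hswap : ∀ᵐ z : En n, ∀ᵐ r : ℝ, z + r • v ∈ sᶜ :=
    (Measure.ae_ae_comm hmeas).mpr (ae_of_all _ fun r =>
      (measurePreserving_add_right volume (r • v)).quasiMeasurePreserving.ae hs')
  filter_upwards [hswap] with z hz
  have := (measurePreserving_add_right (volume : Measure ℝ)
    (-⟪z, v⟫)).quasiMeasurePreserving.ae hz
  filter_upwards [this] with t ht
  by_contra hcon
  have heq : z + (t + -⟪z, v⟫) • v = (z - ⟪z, v⟫ • v) + t • v := by module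
  exact ht (heq ▸ hsp hcon)

/-- For a measurable density and a measurable set the symmetrized set is Borel, because the
fiber measures in `mem_ehrhard1D_iff` are measurable in the base point by Tonelli. -/
theorem measurableSet_ehrhardSymm {n : ℕ} {g : En n → ℝ} (hg : Measurable g) (v : En n)
    {E : Set (En n)} (hE : MeasurableSet E) : MeasurableSet (ehrhardSymm g v E) := by
  have hline : Measurable fun p : En n × ℝ => (p.1 - ⟪p.1, v⟫ • v) + p.2 • v :=
    Continuous.measurable (by fun_prop)
  -- measures of measurable slices depend measurably on the base point
  have key : ∀ S : Set (En n × ℝ), MeasurableSet S →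
      Measurable fun z : En n => fiberMeasure g (z - ⟪z, v⟫ • v) v {t | (z, t) ∈ S} := by
    intro S hS
    have hF : Measurable (S.indicator fun p : En n × ℝ =>
        ENNReal.ofReal (g ((p.1 - ⟪p.1, v⟫ • v) + p.2 • v))) :=
      (hg.comp hline).ennreal_ofReal.indicator hS
    convert hF.lintegral_prod_right' (ν := (volume : Measure ℝ)) using 2 with z
    have hSz : MeasurableSet {t : ℝ | (z, t) ∈ S} := measurable_prodMk_left hS
    rw [fiberMeasure, withDensity_apply _ hSz, ← lintegral_indicator hSz]
    rfl
  have : ehrhardSymm g v E = ⋂ k : ℕ, {z |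
      fiberMeasure g (z - ⟪z, v⟫ • v) v {y | ⟪z, v⟫ + 1 / ((k : ℝ) + 1) ≤ y} ≤
        fiberMeasure g (z - ⟪z, v⟫ • v) v {t | (z - ⟪z, v⟫ • v) + t • v ∈ E}} := by
    ext z
    simp only [ehrhardSymm, mem_ofPred_eq, mem_ehrhard1D_iff, mem_iInter]
  rw [this]
  refine MeasurableSet.iInter fun k => measurableSet_le ?_ ?_
  · refine key {p | ⟪p.1, v⟫ + 1 / ((k : ℝ) + 1) ≤ p.2} ?_
    have hinner : Measurable fun p : En n × ℝ => ⟪p.1, v⟫ :=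
      Continuous.measurable (by fun_prop)
    exact measurableSet_le (hinner.add_const _) measurable_snd
  · exact key ((fun p : En n × ℝ => (p.1 - ⟪p.1, v⟫ • v) + p.2 • v) ⁻¹' E) (hline hE)

/-- **Measurability.** Generalized Ehrhard symmetrization with respect to
`μ = f·Lⁿ ∈ 𝒲(ℝⁿ)` preserves Lebesgue measurability. -/
theorem ehrhard_measurability {n : ℕ} (f : En n → ℝ) (f' : En n → En n) (hW : MemW f f')
    (E : Set (En n)) (hE : NullMeasurableSet E volume) (v : En n) (hv : ‖v‖ = 1) :
    NullMeasurableSet (ehrhardSymm f v E) volume := by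
  obtain ⟨g, hg, hfg⟩ := hW.2.1.aestronglyMeasurable.aemeasurable
  obtain ⟨E₀, hE₀, hEE⟩ := hE.exists_measurable_superset_ae_eq.imp fun _ h => h.2
  refine (measurableSet_ehrhardSymm hg v hE₀).nullMeasurableSet.congr ?_
  filter_upwards [ae_ae_line v hfg, ae_ae_line v hEE] with z hz hzE
  have hν : fiberMeasure f (z - ⟪z, v⟫ • v) v = fiberMeasure g (z - ⟪z, v⟫ • v) v :=
    withDensity_congr_ae (hz.mono fun t ht => by simp only [ht])
  have hA : fiberMeasure g (z - ⟪z, v⟫ • v) v {t | (z - ⟪z, v⟫ • v) + t • v ∈ E₀} =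
      fiberMeasure g (z - ⟪z, v⟫ • v) v {t | (z - ⟪z, v⟫ • v) + t • v ∈ E} :=
    measure_congr ((withDensity_absolutelyContinuous _ _).ae_le hzE)
  change (⟪z, v⟫ ∈ ehrhard1D _ 1 _) = (⟪z, v⟫ ∈ ehrhard1D _ 1 _)
  rw [mem_ehrhard1D_iff, mem_ehrhard1D_iff, hν, hA]

end
end

section
/- Let ν = f·L¹ ∈ 𝒲(ℝ) be a PS measure whose density f is continuous on ℝ and satisfies f > 0 everywhere. Then f is symmetric: there exists m ∈ ℝ such that f(m − t) = f(m + t) for all t ∈ ℝ. -/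
/-!
Write `F x = ν((-∞, x])` and `M = ν(ℝ)`. As `f` is continuous and positive, `F` is a `C¹` increasing
bijection from `ℝ` onto `(0, M)`, so for each `a` there is a unique `r a` with `F (r a) = M - F a`;
the map `r` is an involution, and `[r a, ∞)` is the symmetrization of `(-∞, a]` in direction `+1`
(`ehrhard1D_Iic`).

The perimeter of a half-line is the value of `f` at its endpoint (`perim1_Iic_le`,
`le_perim1_Ici`), which rests on the integration by parts `setIntegral_Iic_weak_div`. The PS
property applied to `(-∞, a]` therefore gives `f (r a) ≤ f a`, and applied to `(-∞, r a]` the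
converse, so `f (r a) = f a`.

Differentiating `F (r a) = M - F a` gives `r' a = -f a / f (r a) = -1`. Hence `r a = 2 m - a` for
some `m`, and `f (r a) = f a` is the claimed symmetry about `m`.
-/

open MeasureTheory Set Filter
open scoped ENNReal Topology

noncomputable section

/-- The weighted variation `‖g‖_{BV_ν(ℝ)}` for `ν = f·L¹` with weak derivative `f'`. -/
noncomputable def bvVar1 (f f' : ℝ → ℝ) (g : ℝ → ℝ) : ℝ≥0∞ :=
  ⨆ (φ : ℝ → ℝ) (_ : ContDiff ℝ 1 φ ∧ HasCompactSupport φ ∧ ∀ x, |φ x| ≤ 1),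
    ENNReal.ofReal (∫ x, g x * (f x * deriv φ x + φ x * f' x))

/-- The weighted perimeter `Per_ν(E)`. -/
noncomputable def perim1 (f f' : ℝ → ℝ) (E : Set ℝ) : ℝ≥0∞ :=
  bvVar1 f f' (E.indicator fun _ => (1 : ℝ))

/-- The measure `ν = f·L¹`. -/
noncomputable def mu1 (f : ℝ → ℝ) : Measure ℝ :=
  volume.withDensity fun x => ENNReal.ofReal (f x)

/-- `ν = f·L¹` is a perimeter symmetrization (PS) measure on `ℝ`. -/
def IsPS1 (f f' : ℝ → ℝ) : Prop :=
  ∀ v : ℝ, (v = 1 ∨ v = -1) → ∀ E : Set ℝ, NullMeasurableSet E volume →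
    perim1 f f' E < ⊤ →
      perim1 f f' (ehrhard1D (mu1 f) v E) ≤ perim1 f f' E

/-! ### The perimeter of a half-line -/

/-- The kernels `x ↦ N * s (N * (a - x) + 1)`, with `N = n + 1`, concentrate at `a` with total mass
`∫ s`; after the substitution `u = N * (a - x) + 1` this is dominated convergence. -/
lemma tendsto_integral_mul_rescaled {h s : ℝ → ℝ} (hh : Continuous h) (hhs : HasCompactSupport h)
    (hs : Continuous s) (hss : HasCompactSupport s) (a : ℝ) :
    Tendsto (fun n : ℕ => ∫ x, h x * (((n : ℝ) + 1) * s (((n : ℝ) + 1) * (a - x) + 1)))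
      atTop (𝓝 (h a * ∫ u, s u)) := by
  have key : ∀ n : ℕ, (∫ x, h x * (((n : ℝ) + 1) * s (((n : ℝ) + 1) * (a - x) + 1)))
      = ∫ u, h (a + (1 - u) / ((n : ℝ) + 1)) * s u := by
    intro n
    have hN : (0 : ℝ) < (n : ℝ) + 1 := by positivity
    set N : ℝ := (n : ℝ) + 1
    have h1 := Measure.integral_comp_mul_left
      (fun u => h (a + (1 - (u + (N * a + 1))) / N) * s (u + (N * a + 1))) (-N)
    rw [integral_add_right_eq_self (fun u => h (a + (1 - u) / N) * s u)] at h1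
    have h2 : |(-N)⁻¹| = N⁻¹ := by rw [inv_neg, abs_neg, abs_of_pos (by positivity)]
    rw [h2, smul_eq_mul] at h1
    have h3 : (∫ u, h (a + (1 - u) / N) * s u) =
        N * ∫ x, h (a + (1 - (-N * x + (N * a + 1))) / N) * s (-N * x + (N * a + 1)) := by
      rw [h1]; field_simp
    rw [h3, ← integral_const_mul]
    congr 1
    ext x
    have e1 : a + (1 - (-N * x + (N * a + 1))) / N = x := by field_simp; ring
    have e2 : -N * x + (N * a + 1) = N * (a - x) + 1 := by ring
    rw [e1, e2]; ring
  simp_rw [key]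
  obtain ⟨C, hC⟩ := hh.bounded_above_of_compact_support hhs
  rw [← integral_const_mul]
  refine tendsto_integral_of_dominated_convergence (fun u => C * |s u|) ?_ ?_ ?_ ?_
  · intro n
    have hc : Continuous fun u => h (a + (1 - u) / ((n : ℝ) + 1)) * s u := by fun_prop
    exact hc.aestronglyMeasurable
  · exact (hs.integrable_of_hasCompactSupport hss).abs.const_mul C
  · intro n
    refine ae_of_all _ fun u => ?_
    rw [norm_mul, Real.norm_eq_abs (s u)]
    exact mul_le_mul_of_nonneg_right (hC _) (abs_nonneg _)
  · refine ae_of_all _ fun u => Tendsto.mul_const _ ?_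
    have h1 : Tendsto (fun n : ℕ => a + (1 - u) / ((n : ℝ) + 1)) atTop (𝓝 (a + 0)) := by
      refine tendsto_const_nhds.add (tendsto_const_nhds.div_atTop ?_)
      exact tendsto_atTop_add_const_right _ _ tendsto_natCast_atTop_atTop
    rw [add_zero] at h1
    exact (hh.tendsto a).comp h1

lemma deriv_smoothTransition_eq_zero {x : ℝ} (hx : x ∉ Icc (0 : ℝ) 1) :
    deriv Real.smoothTransition x = 0 := by
  rw [mem_Icc, not_and_or, not_le, not_le] at hx
  rcases hx with hx | hx
  · have : Real.smoothTransition =ᶠ[𝓝 x] fun _ => 0 := by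
      filter_upwards [Iio_mem_nhds hx] with y hy
      exact Real.smoothTransition.zero_of_nonpos (le_of_lt hy)
    rw [this.deriv_eq, deriv_const]
  · have : Real.smoothTransition =ᶠ[𝓝 x] fun _ => 1 := by
      filter_upwards [Ioi_mem_nhds hx] with y hy
      exact Real.smoothTransition.one_of_one_le (le_of_lt hy)
    rw [this.deriv_eq, deriv_const]

lemma hasCompactSupport_deriv_smoothTransition :
    HasCompactSupport (deriv Real.smoothTransition) :=
  HasCompactSupport.intro isCompact_Icc fun _ hx => deriv_smoothTransition_eq_zero hx

lemma contDiff_one_smoothTransition : ContDiff ℝ 1 Real.smoothTransition :=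
  Real.smoothTransition.contDiff (n := 1)

lemma integral_deriv_smoothTransition : ∫ u, deriv Real.smoothTransition u = 1 := by
  have hc : Continuous (deriv Real.smoothTransition) :=
    contDiff_one_smoothTransition.continuous_deriv le_rfl
  have h := integral_of_hasDerivAt_of_tendsto (f := Real.smoothTransition)
    (f' := deriv Real.smoothTransition) (m := 0) (n := 1)
    (fun x => (contDiff_one_smoothTransition.differentiable one_ne_zero x).hasDerivAt)
    (hc.integrable_of_hasCompactSupport hasCompactSupport_deriv_smoothTransition)
    (tendsto_const_nhds.congr' ?_) (tendsto_const_nhds.congr' ?_)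
  · simpa using h
  · filter_upwards [Iic_mem_atBot (0 : ℝ)] with y hy
    exact (Real.smoothTransition.zero_of_nonpos hy).symm
  · filter_upwards [Ici_mem_atTop (1 : ℝ)] with y hy
    exact (Real.smoothTransition.one_of_one_le hy).symm

section Perimeter

variable {f f' : ℝ → ℝ}

lemma integrable_weak_div (hW : HasWeakDeriv f f') {φ : ℝ → ℝ} (hφ : ContDiff ℝ 1 φ)
    (hφs : HasCompactSupport φ) : Integrable (fun x => f x * deriv φ x + φ x * f' x) := by
  refine Integrable.add ?_ ?_
  · simpa [mul_comm] using hW.1.integrable_smul_left_of_hasCompactSupport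
      (hφ.continuous_deriv le_rfl) hφs.deriv
  · simpa using hW.2.1.integrable_smul_left_of_hasCompactSupport hφ.continuous hφs

lemma integral_weak_div (hW : HasWeakDeriv f f') {φ : ℝ → ℝ} (hφ : ContDiff ℝ 1 φ)
    (hφs : HasCompactSupport φ) : ∫ x, (f x * deriv φ x + φ x * f' x) = 0 := by
  rw [integral_add, hW.2.2 φ hφ hφs, neg_add_cancel]
  · simpa [mul_comm] using hW.1.integrable_smul_left_of_hasCompactSupport
      (hφ.continuous_deriv le_rfl) hφs.deriv
  · simpa using hW.2.1.integrable_smul_left_of_hasCompactSupport hφ.continuous hφs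

/-- Integration by parts on a half-line. It follows by testing the weak derivative against `φ · η`,
where `η` is a smooth cutoff equal to `1` on `(-∞, a]` and to `0` beyond `a + 1/(n+1)`. -/
lemma setIntegral_Iic_weak_div (hW : HasWeakDeriv f f') (hcont : Continuous f) {φ : ℝ → ℝ}
    (hφ : ContDiff ℝ 1 φ) (hφs : HasCompactSupport φ) (a : ℝ) :
    ∫ x in Iic a, (f x * deriv φ x + φ x * f' x) = f a * φ a := by
  set w : ℝ → ℝ := fun x => f x * deriv φ x + φ x * f' x with hw
  have hwi : Integrable w := integrable_weak_div hW hφ hφs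
  let η : ℕ → ℝ → ℝ := fun n x => Real.smoothTransition (((n : ℝ) + 1) * (a - x) + 1)
  have hη : ∀ n, ContDiff ℝ 1 (η n) := fun n =>
    contDiff_one_smoothTransition.comp (by fun_prop)
  have hηd : ∀ n x, HasDerivAt (η n)
      (-(((n : ℝ) + 1) * deriv Real.smoothTransition (((n : ℝ) + 1) * (a - x) + 1))) x := by
    intro n x
    have h1 : HasDerivAt (fun x : ℝ => ((n : ℝ) + 1) * (a - x) + 1) (((n : ℝ) + 1) * (-1)) x :=
      (((hasDerivAt_id x).const_sub a).const_mul _).add_const _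
    have h2 := ((contDiff_one_smoothTransition.differentiable one_ne_zero
      (((n : ℝ) + 1) * (a - x) + 1)).hasDerivAt).comp x h1
    exact h2.congr_deriv (by ring)
  have hφd : ∀ x, HasDerivAt φ (deriv φ x) x := fun x =>
    (hφ.differentiable one_ne_zero x).hasDerivAt
  have hη1 : ∀ n x, |η n x| ≤ 1 := fun n x =>
    abs_le.2 ⟨by linarith [Real.smoothTransition.nonneg (((n : ℝ) + 1) * (a - x) + 1)],
      Real.smoothTransition.le_one _⟩
  have hlim1 : Tendsto (fun n => ∫ x, η n x * w x) atTop (𝓝 (∫ x in Iic a, w x)) := by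
    rw [← integral_indicator measurableSet_Iic]
    refine tendsto_integral_of_dominated_convergence (fun x => |w x|) ?_ hwi.abs ?_ ?_
    · exact fun n => (hη n).continuous.aestronglyMeasurable.mul hwi.aestronglyMeasurable
    · intro n
      refine ae_of_all _ fun x => ?_
      rw [Real.norm_eq_abs, abs_mul]
      exact mul_le_of_le_one_left (abs_nonneg _) (hη1 n x)
    · refine ae_of_all _ fun x => ?_
      refine tendsto_const_nhds.congr' ?_
      by_cases hx : x ≤ a
      · refine Eventually.of_forall fun n => ?_
        have : η n x = 1 := Real.smoothTransition.one_of_one_le (by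
          have : (0 : ℝ) ≤ ((n : ℝ) + 1) * (a - x) := by
            have := sub_nonneg.2 hx
            positivity
          linarith)
        simp [this, hx]
      · obtain ⟨k, hk⟩ := exists_nat_gt (1 / (x - a))
        have hxa : 0 < x - a := by linarith
        rw [div_lt_iff₀ hxa] at hk
        filter_upwards [eventually_ge_atTop k] with n hn
        have hn' : (k : ℝ) ≤ n := by exact_mod_cast hn
        have : η n x = 0 := Real.smoothTransition.zero_of_nonpos (by nlinarith)
        simp [this, hx]
  have hlim2 := tendsto_integral_mul_rescaled (hcont.mul hφ.continuous) (hφs.mul_left (f := f))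
    (contDiff_one_smoothTransition.continuous_deriv le_rfl)
    hasCompactSupport_deriv_smoothTransition a
  rw [integral_deriv_smoothTransition, mul_one] at hlim2
  refine tendsto_nhds_unique hlim1 (hlim2.congr fun n => ?_)
  have h0 := integral_weak_div hW (hφ.mul (hη n)) (hφs.mul_right (f' := η n))
  have hηw : Integrable (fun x => η n x * w x) :=
    hwi.bdd_mul (hη n).continuous.aestronglyMeasurable (ae_of_all _ (hη1 n))
  have hi2 : Integrable (fun x => (f * φ) x * (((n : ℝ) + 1) *
      deriv Real.smoothTransition (((n : ℝ) + 1) * (a - x) + 1))) := by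
    refine Continuous.integrable_of_hasCompactSupport ?_ ((hφs.mul_left (f := f)).mul_right)
    have := contDiff_one_smoothTransition.continuous_deriv le_rfl
    have h2 := hφ.continuous
    exact (hcont.mul h2).mul (by fun_prop)
  have h3 : (∫ x, η n x * w x) - ∫ x, (f * φ) x * (((n : ℝ) + 1) *
      deriv Real.smoothTransition (((n : ℝ) + 1) * (a - x) + 1)) = 0 := by
    rw [← integral_sub hηw hi2, ← h0]
    congr 1
    ext x
    have hd : deriv (fun x => φ x * η n x) x = _ := ((hφd x).mul (hηd n x)).deriv
    rw [hd]
    simp only [hw, Pi.mul_apply]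
    ring
  linarith

lemma exists_test_function (a : ℝ) : ∃ φ : ℝ → ℝ,
    (ContDiff ℝ 1 φ ∧ HasCompactSupport φ ∧ ∀ x, |φ x| ≤ 1) ∧ φ a = 1 := by
  let b : ContDiffBump a := ⟨1, 2, one_pos, one_lt_two⟩
  refine ⟨b, ⟨b.contDiff, b.hasCompactSupport, fun x => ?_⟩, ?_⟩
  · rw [abs_of_nonneg b.nonneg]; exact b.le_one
  · exact b.one_of_mem_closedBall (by simp [b])

/-- Equality holds, but only the upper bound is needed: half-lines `(-∞, a]` serve as competitors. -/
lemma perim1_Iic_le (hW : HasWeakDeriv f f') (hcont : Continuous f) (hnonneg : ∀ x, 0 ≤ f x)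
    (a : ℝ) : perim1 f f' (Iic a) ≤ ENNReal.ofReal (f a) := by
  refine iSup₂_le fun φ hφ => ENNReal.ofReal_le_ofReal ?_
  have : (∫ x, (Iic a).indicator (fun _ => (1 : ℝ)) x * (f x * deriv φ x + φ x * f' x))
      = ∫ x in Iic a, (f x * deriv φ x + φ x * f' x) := by
    rw [← integral_indicator measurableSet_Iic]
    congr 1; ext x
    by_cases hx : x ≤ a <;> simp [hx]
  rw [this, setIntegral_Iic_weak_div hW hcont hφ.1 hφ.2.1]
  exact mul_le_of_le_one_right (hnonneg a) (le_trans (le_abs_self _) (hφ.2.2 a))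

/-- The test function is minus a bump at `b`, since `∫ x in Ici b, (f φ)' = -(f b * φ b)`. -/
lemma le_perim1_Ici (hW : HasWeakDeriv f f') (hcont : Continuous f) (b : ℝ) :
    ENNReal.ofReal (f b) ≤ perim1 f f' (Ici b) := by
  obtain ⟨φ, ⟨h1, h2, h3⟩, hb⟩ := exists_test_function b
  have h2' : HasCompactSupport (fun x => -φ x) := h2.neg
  refine le_trans (ENNReal.ofReal_le_ofReal ?_)
    (le_iSup₂ (f := fun (φ : ℝ → ℝ) (_ : ContDiff ℝ 1 φ ∧ HasCompactSupport φ ∧ ∀ x, |φ x| ≤ 1) =>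
      ENNReal.ofReal (∫ x, (Ici b).indicator (fun _ => (1 : ℝ)) x *
        (f x * deriv φ x + φ x * f' x)))
      (fun x => -φ x) ⟨h1.neg, h2', fun x => by rw [abs_neg]; exact h3 x⟩)
  have : (∫ x, (Ici b).indicator (fun _ => (1 : ℝ)) x *
        (f x * deriv (fun x => -φ x) x + (-φ x) * f' x))
      = ∫ x in Ioi b, (f x * deriv (fun x => -φ x) x + (-φ x) * f' x) := by
    rw [← integral_Ici_eq_integral_Ioi, ← integral_indicator measurableSet_Ici]
    congr 1; ext x
    by_cases hx : b ≤ x <;> simp [hx]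
  have hi := integrable_weak_div hW h1.neg h2'
  have h4 := intervalIntegral.integral_Iic_add_Ioi (b := b) hi.integrableOn hi.integrableOn
  rw [integral_weak_div hW h1.neg h2', setIntegral_Iic_weak_div hW hcont h1.neg h2', hb] at h4
  rw [this]
  linarith

end Perimeter

/-! ### The distribution function and the symmetrization of a half-line -/

/-- The distribution function `x ↦ ν((-∞, x])` of `ν = f·L¹`. -/
def cdf1 (f : ℝ → ℝ) (x : ℝ) : ℝ := ∫ y in Iic x, f y

section Distribution

variable {f : ℝ → ℝ}

lemma hasDerivAt_cdf1 (hint : Integrable f) (hcont : Continuous f) (x : ℝ) :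
    HasDerivAt (cdf1 f) (f x) x := by
  have h : cdf1 f = fun x => (∫ y in (0 : ℝ)..x, f y) + cdf1 f 0 := by
    ext x
    rw [← intervalIntegral.integral_Iic_sub_Iic hint.integrableOn hint.integrableOn]
    simp [cdf1]
  rw [h]
  exact ((hcont.integral_hasStrictDerivAt 0 x).hasDerivAt).add_const _

lemma strictMono_cdf1 (hint : Integrable f) (hcont : Continuous f) (hpos : ∀ x, 0 < f x) :
    StrictMono (cdf1 f) :=
  strictMono_of_deriv_pos fun x => by
    rw [(hasDerivAt_cdf1 hint hcont x).deriv]; exact hpos x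

lemma cdf1_add_Ici (hint : Integrable f) (x : ℝ) :
    (∫ y in Ici x, f y) = (∫ y, f y) - cdf1 f x := by
  rw [integral_Ici_eq_integral_Ioi, cdf1,
    ← intervalIntegral.integral_Iic_add_Ioi (b := x) hint.integrableOn hint.integrableOn]
  ring

lemma cdf1_mem_Ioo (hint : Integrable f) (hcont : Continuous f) (hpos : ∀ x, 0 < f x) (x : ℝ) :
    cdf1 f x ∈ Ioo 0 (∫ y, f y) := by
  have hm := strictMono_cdf1 hint hcont hpos
  constructor
  · refine lt_of_le_of_lt ?_ (hm (sub_one_lt x))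
    exact integral_nonneg fun y => (hpos y).le
  · refine lt_of_lt_of_le (hm (lt_add_one x)) ?_
    have h1 := cdf1_add_Ici hint (x + 1)
    have h2 : 0 ≤ ∫ y in Ici (x + 1), f y := integral_nonneg fun y => (hpos y).le
    linarith

lemma exists_cdf1_eq (hint : Integrable f) (hcont : Continuous f) {y : ℝ}
    (hy : y ∈ Ioo 0 (∫ y, f y)) : ∃ x, cdf1 f x = y := by
  have hc : Continuous (cdf1 f) :=
    continuous_iff_continuousAt.2 fun x => (hasDerivAt_cdf1 hint hcont x).continuousAt
  have htop : Tendsto (cdf1 f) atTop (𝓝 (∫ y, f y)) :=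
    (aecover_Iic tendsto_id).integral_tendsto_of_countably_generated hint
  have hbot : Tendsto (cdf1 f) atBot (𝓝 0) := by
    have h : Tendsto (fun x => ∫ y in Ici x, f y) atBot (𝓝 (∫ y, f y)) :=
      (aecover_Ici tendsto_id).integral_tendsto_of_countably_generated hint
    have h2 := h.const_sub (∫ y, f y)
    rw [sub_self] at h2
    refine h2.congr fun x => ?_
    rw [cdf1_add_Ici hint]; ring
  obtain ⟨p, hp⟩ := (hbot.eventually_lt_const hy.1).exists
  obtain ⟨q, hq⟩ := (htop.eventually_const_lt hy.2).exists
  exact mem_range_of_exists_le_of_exists_ge hc ⟨p, hp.le⟩ ⟨q, hq.le⟩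

lemma mu1_apply (hint : Integrable f) (hnonneg : ∀ x, 0 ≤ f x) {s : Set ℝ}
    (hs : MeasurableSet s) : mu1 f s = ENNReal.ofReal (∫ y in s, f y) := by
  rw [mu1, withDensity_apply _ hs,
    ofReal_integral_eq_lintegral_ofReal hint.integrableOn (ae_of_all _ hnonneg)]

/-- The symmetrization in direction `+1` of `(-∞, a]` is the half-line `[b, ∞)` of equal measure. -/
lemma ehrhard1D_Iic (hint : Integrable f) (hcont : Continuous f) (hpos : ∀ x, 0 < f x)
    {a b : ℝ} (hab : cdf1 f b = (∫ y, f y) - cdf1 f a) :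
    ehrhard1D (mu1 f) 1 (Iic a) = Ici b := by
  have hnonneg : ∀ x, 0 ≤ f x := fun x => (hpos x).le
  have key : ∀ c : ℝ, mu1 f {y | c ≤ 1 * y} ≤ mu1 f (Iic a) ↔ b ≤ c := by
    intro c
    have : {y : ℝ | c ≤ 1 * y} = Ici c := by ext y; simp
    rw [this, mu1_apply hint hnonneg measurableSet_Ici, mu1_apply hint hnonneg measurableSet_Iic,
      cdf1_add_Ici hint, ENNReal.ofReal_le_ofReal_iff (integral_nonneg hnonneg),
      ← (strictMono_cdf1 hint hcont hpos).le_iff_le (a := b), hab]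
    change _ ≤ cdf1 f a ↔ _
    constructor <;> intro h <;> linarith
  ext t
  change (∀ d : ℝ, (∀ c : ℝ, mu1 f {y | c ≤ 1 * y} ≤ mu1 f (Iic a) → d ≤ c) → d ≤ 1 * t) ↔ b ≤ t
  simp only [key]
  rw [one_mul]
  exact ⟨fun h => h b fun c hc => hc, fun h d hd => (hd b le_rfl).trans h⟩

/-- The inverse of the distribution function, the quantile function, has derivative `1 / f`. -/
lemma hasDerivAt_invFun_cdf1 (hint : Integrable f) (hcont : Continuous f)
    (hpos : ∀ x, 0 < f x) (x : ℝ) :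
    HasDerivAt (Function.invFun (cdf1 f)) (f x)⁻¹ (cdf1 f x) := by
  have hm := strictMono_cdf1 hint hcont hpos
  have hl : ∀ y, Function.invFun (cdf1 f) (cdf1 f y) = y := Function.leftInverse_invFun hm.injective
  have hr : ∀ y ∈ Ioo 0 (∫ y, f y), cdf1 f (Function.invFun (cdf1 f) y) = y := fun y hy =>
    Function.invFun_eq (exists_cdf1_eq hint hcont hy)
  have hmem : Ioo 0 (∫ y, f y) ∈ 𝓝 (cdf1 f x) :=
    isOpen_Ioo.mem_nhds (cdf1_mem_Ioo hint hcont hpos x)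
  refine HasDerivAt.of_local_left_inverse (f := cdf1 f) ?_ ?_ (hpos x).ne' ?_
  · refine StrictMonoOn.continuousAt_of_image_mem_nhds (s := Ioo 0 (∫ y, f y)) ?_ hmem ?_
    · intro p hp q hq hpq
      rw [← hm.lt_iff_lt, hr p hp, hr q hq]; exact hpq
    · refine mem_of_superset univ_mem fun y _ => ?_
      exact ⟨cdf1 f y, cdf1_mem_Ioo hint hcont hpos y, hl y⟩
  · rw [hl]; exact hasDerivAt_cdf1 hint hcont x
  · filter_upwards [hmem] with y hy using hr y hy

end Distribution

/-- A one-dimensional PS measure with continuous, strictly positive density in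
`𝒲(ℝ)` has a symmetric density. -/
theorem ps_measure_symmetric (f f' : ℝ → ℝ)
    (hnonneg : ∀ x, 0 ≤ f x) (hint : Integrable f volume) (hW : HasWeakDeriv f f')
    (hcont : Continuous f) (hpos : ∀ x, 0 < f x)
    (hPS : IsPS1 f f') :
    ∃ m : ℝ, ∀ t : ℝ, f (m - t) = f (m + t) := by
  set M : ℝ := ∫ y, f y with hM
  have hmem : ∀ a, M - cdf1 f a ∈ Ioo 0 M := fun a => by
    have := cdf1_mem_Ioo hint hcont hpos a
    exact ⟨by linarith [this.2], by linarith [this.1]⟩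
  let r : ℝ → ℝ := fun a => Function.invFun (cdf1 f) (M - cdf1 f a)
  -- `r a` is the point with `ν([r a, ∞)) = ν((-∞, a])`.
  have hr : ∀ a, cdf1 f (r a) = M - cdf1 f a := fun a =>
    Function.invFun_eq (exists_cdf1_eq hint hcont (hmem a))
  have hrr : ∀ a, r (r a) = a := fun a =>
    (strictMono_cdf1 hint hcont hpos).injective (by rw [hr, hr]; ring)
  have hle : ∀ a, f (r a) ≤ f a := by
    intro a
    have hper := perim1_Iic_le hW hcont hnonneg a
    have h := hPS 1 (Or.inl rfl) (Iic a) measurableSet_Iic.nullMeasurableSet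
      (hper.trans_lt ENNReal.ofReal_lt_top)
    rw [ehrhard1D_Iic hint hcont hpos (hr a)] at h
    exact (ENNReal.ofReal_le_ofReal_iff (hnonneg a)).1
      ((le_perim1_Ici hW hcont (r a)).trans (h.trans hper))
  have heq : ∀ a, f (r a) = f a := fun a =>
    le_antisymm (hle a) (by simpa only [hrr] using hle (r a))
  have hder : ∀ a, HasDerivAt (fun a => r a + a) 0 a := by
    intro a
    have h1 := hasDerivAt_invFun_cdf1 hint hcont hpos (r a)
    rw [hr a, heq a] at h1
    have h2 := (h1.comp a ((hasDerivAt_cdf1 hint hcont a).const_sub M)).add (hasDerivAt_id a)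
    refine h2.congr_deriv ?_
    have := (hpos a).ne'
    field_simp
    ring
  have hconst : ∀ a, r a + a = r 0 + 0 := fun a =>
    is_const_of_deriv_eq_zero (fun x => (hder x).differentiableAt) (fun x => (hder x).deriv) a 0
  refine ⟨r 0 / 2, fun t => ?_⟩
  have h := hconst (r 0 / 2 + t)
  rw [← heq (r 0 / 2 + t)]
  congr 1
  linarith

end
end
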